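/- arXiv:1401.6654 — 4 statements merged into one kernel-verified Lean document; each statement's English description precedes it below -/
import Mathlib

section
/- Let X be a metric space which is uniquely geodesic with geodesics depending continuously on their endpoints; that is, there exists a continuous map γ : X × X × [0,1] → X such that for all x, y ∈ X one has γ(x,y,0) = x, γ(x,y,1) = y, dist(γ(x,y,s), γ(x,y,t)) = |s − t| · dist(x,y) for all s, t ∈ [0,1], and moreover every isometric embedding of the interval [0, dist(x,y)] into X sending the endpoints 0 and dist(x,y) to x and y respectively has image equal to the image of t ↦ γ(x,y,t). Assume that X has compact topological dimension at most n < ∞, i.e., for every compact subset K of X, every open cover of K admits an open refinement covering K in which every point of K belongs to at most n + 1 members of the refinement. Let A₁, …, A_m be convex subsets of X (a set A is convex if for all x, y ∈ A the image of the segment t ↦ γ(x,y,t) is contained in A) such that every subcollection of cardinality at most n + 1 has a nonempty intersection. Then ⋂_{i=1}^m A_i is nonempty. -/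
/-- `X` has compact topological dimension at most `n`: every open cover of every
compact subset `K` admits an open refinement covering `K` in which every point of `K`
belongs to at most `n + 1` members. -/
def CompactTopDimLE (X : Type) [TopologicalSpace X] (n : ℕ) : Prop :=
  ∀ K : Set X, IsCompact K → ∀ (ι : Type) (U : ι → Set X),
    (∀ i, IsOpen (U i)) → K ⊆ ⋃ i, U i →
    ∃ (κ : Type) (V : κ → Set X), (∀ j, IsOpen (V j)) ∧ K ⊆ (⋃ j, V j) ∧
      (∀ j, ∃ i, V j ⊆ U i) ∧
      ∀ x ∈ K, ∃ s : Finset κ, s.card ≤ n + 1 ∧ ∀ j, x ∈ V j → j ∈ s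

namespace HellyAux

open Finset

/-- Chains mod 2 on the full simplex with vertex set `ℕ`. -/
abbrev Chain := Finset ℕ → ZMod 2

def wed (i : ℕ) (c : Chain) : Chain := fun S => if i ∈ S then c (S.erase i) else 0

def bd (M : ℕ) (c : Chain) : Chain := fun S => ∑ i ∈ range M \ S, c (insert i S)

def unitC : Chain := fun S => if S = ∅ then 1 else 0

lemma two_zero (x : Chain) : x + x = 0 := by
  funext S
  exact CharTwo.add_self_eq_zero (x S)

lemma bd_add (M : ℕ) (c d : Chain) : bd M (c + d) = bd M c + bd M d := by
  funext S; simp [bd, sum_add_distrib]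

lemma bd_sum (M : ℕ) {ι : Type} (s : Finset ι) (c : ι → Chain) :
    bd M (∑ j ∈ s, c j) = ∑ j ∈ s, bd M (c j) := by
  funext S; simp only [bd, Finset.sum_apply]; rw [sum_comm]

lemma bd_unit (M : ℕ) : bd M unitC = 0 := by
  funext S; simp [bd, unitC]

lemma wed_zero (i : ℕ) : wed i 0 = 0 := by
  funext S; simp [wed]

lemma bd_wed (M l : ℕ) (hl : l < M) (c : Chain) :
    bd M (wed l c) = c + wed l (bd M c) := by
  funext S
  simp only [bd, wed, Pi.add_apply]
  by_cases h : l ∈ S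
  · simp only [mem_insert, h, or_true, if_true]
    have e : range M \ S.erase l = insert l (range M \ S) := by
      ext x; by_cases hx : x = l <;> simp [hx, hl]
    rw [e, sum_insert (by simp [h]), insert_erase h, ← add_assoc,
      CharTwo.add_self_eq_zero, zero_add]
    refine sum_congr rfl fun i hi => ?_
    have : i ≠ l := by rintro rfl; simp [h] at hi
    rw [erase_insert_of_ne this]
  · simp only [mem_insert, h, or_false, if_false, add_zero]
    rw [sum_eq_single l]
    · simp [h]
    · intro b _ hb; simp [hb.symm]
    · intro h'; simp [hl, h] at h'

variable {N : ℕ}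

def step (a : Fin N → ℕ) (j : Fin N) : Fin N → ℕ := a + Pi.single j 1

def ch (l : (Fin N → ℕ) → ℕ) : ℕ → (Fin N → ℕ) → Finset (Fin N) → Chain
  | 0, a, _ => wed (l a) unitC
  | d + 1, a, J => wed (l a)
      (∑ j ∈ J, (ch l d a (J.erase j) + ch l d (step a j) (J.erase j)))

def bnd (l : (Fin N → ℕ) → ℕ) (d : ℕ) (a : Fin N → ℕ) (J : Finset (Fin N)) : Chain :=
  ∑ j ∈ J, (ch l d a (J.erase j) + ch l d (step a j) (J.erase j))

lemma sum_sym {ι : Type} [DecidableEq ι] (J : Finset ι) (F : ι → ι → Chain)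
    (hF : ∀ i j, F i j = F j i) : ∑ j ∈ J, ∑ i ∈ J.erase j, F j i = 0 := by
  have : ∑ j ∈ J, ∑ i ∈ J.erase j, F j i = ∑ p ∈ J.offDiag, F p.1 p.2 := by
    rw [sum_sigma']
    refine sum_nbij' (fun x => (x.1, x.2)) (fun p => ⟨p.1, p.2⟩) ?_ ?_ ?_ ?_ ?_
    · rintro ⟨a, b⟩ h; simp at h ⊢; exact ⟨h.1, h.2.2, fun e => h.2.1 e.symm⟩
    · rintro ⟨a, b⟩ h; simp at h ⊢; exact ⟨h.1, fun e => h.2.2 e.symm, h.2.1⟩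
    · rintro ⟨a, b⟩ h; rfl
    · rintro ⟨a, b⟩ h; rfl
    · rintro ⟨a, b⟩ h; rfl
  rw [this]
  refine sum_involution (fun p _ => p.swap) ?_ ?_ ?_ ?_
  · rintro ⟨a, b⟩ _; simp only [Prod.swap]; rw [hF b a]; exact two_zero _
  · rintro ⟨a, b⟩ h _ e; simp at h e; exact h.2.2 e.2
  · rintro ⟨a, b⟩ h; simp at h ⊢; exact ⟨h.2.1, h.1, fun e => h.2.2 e.symm⟩
  · rintro ⟨a, b⟩ h; rfl

lemma step_comm (a : Fin N → ℕ) (i j : Fin N) : step (step a i) j = step (step a j) i := by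
  simp only [step]; exact add_right_comm _ _ _

lemma bd_ch (M : ℕ) (l : (Fin N → ℕ) → ℕ) (hl : ∀ a, l a < M) (d : ℕ) :
    ∀ (a : Fin N → ℕ) (J : Finset (Fin N)), J.card = d + 1 →
      bd M (ch l (d + 1) a J) = bnd l d a J := by
  induction d with
  | zero =>
    intro a J hJ
    obtain ⟨j, rfl⟩ := card_eq_one.1 hJ
    simp only [ch, bnd]
    rw [bd_wed _ _ (hl a)]
    simp only [sum_singleton, bd_add, bd_wed _ _ (hl _), bd_unit, wed_zero, add_zero, two_zero]
  | succ d ih =>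
    intro a J hJ
    rw [ch, bd_wed _ _ (hl a)]
    have : bd M (∑ j ∈ J, (ch l (d+1) a (J.erase j) + ch l (d+1) (step a j) (J.erase j))) = 0 := by
      rw [bd_sum, ← sum_sym J (fun j i =>
        (ch l d a ((J.erase j).erase i) + ch l d (step a i) ((J.erase j).erase i)) +
        (ch l d (step a j) ((J.erase j).erase i)
          + ch l d (step (step a j) i) ((J.erase j).erase i)))]
      · refine sum_congr rfl fun j hj => ?_
        have hc : (J.erase j).card = d + 1 := by rw [card_erase_of_mem hj, hJ]; rfl
        rw [bd_add, ih _ _ hc, ih _ _ hc, bnd, bnd, ← sum_add_distrib]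
      · intro i j
        rw [erase_right_comm, step_comm a i j]
        abel
    rw [this, wed_zero, add_zero, bnd]

lemma ch_supp (l : (Fin N → ℕ) → ℕ) (d : ℕ) :
    ∀ (a : Fin N → ℕ) (J : Finset (Fin N)) (S : Finset ℕ), ch l d a J S ≠ 0 →
      ∀ i ∈ S, ∃ v : Fin N → ℕ, (∀ j, a j ≤ v j) ∧ (∀ j, v j ≤ a j + 1) ∧
        (∀ j, j ∉ J → v j = a j) ∧ l v = i := by
  induction d with
  | zero =>
    intro a J S h i hi
    refine ⟨a, fun _ => le_rfl, fun _ => Nat.le_succ _, fun _ _ => rfl, ?_⟩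
    simp only [ch, wed, unitC] at h
    by_contra hne
    apply h
    by_cases h1 : l a ∈ S
    · rw [if_pos h1, if_neg]
      intro h2
      have : i ∈ S.erase (l a) := mem_erase.2 ⟨fun e => hne e.symm, hi⟩
      rw [h2] at this; simp at this
    · rw [if_neg h1]
  | succ d ih =>
    intro a J S h i hi
    by_cases hne : l a = i
    · exact ⟨a, fun _ => le_rfl, fun _ => Nat.le_succ _, fun _ _ => rfl, hne⟩
    simp only [ch, wed] at h
    have h1 : l a ∈ S := by by_contra h1; simp [h1] at h
    rw [if_pos h1, Finset.sum_apply] at h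
    obtain ⟨j, hj, h⟩ := exists_ne_zero_of_sum_ne_zero h
    have hi' : i ∈ S.erase (l a) := mem_erase.2 ⟨fun e => hne e.symm, hi⟩
    have : ch l d a (J.erase j) (S.erase (l a)) ≠ 0 ∨
        ch l d (step a j) (J.erase j) (S.erase (l a)) ≠ 0 := by
      by_contra hh; push Not at hh; simp [hh] at h
    rcases this with h | h
    · obtain ⟨v, h1, h2, h3, h4⟩ := ih _ _ _ h i hi'
      exact ⟨v, h1, h2, fun x hx => h3 x fun hx' => hx (mem_of_mem_erase hx'), h4⟩
    · obtain ⟨v, h1, h2, h3, h4⟩ := ih _ _ _ h i hi'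
      have hs : ∀ x, x ≠ j → step a j x = a x := fun x hx => by simp [step, hx]
      have hsj : step a j j = a j + 1 := by simp [step]
      refine ⟨v, fun x => ?_, fun x => ?_, fun x hx => ?_, h4⟩
      · by_cases e : x = j
        · subst e; have := h1 x; omega
        · have := h1 x; rw [hs x e] at this; exact this
      · by_cases e : x = j
        · subst e; rw [h3 x (by simp), hsj]
        · have := h2 x; rw [hs x e] at this; exact this
      · have e : x ≠ j := by rintro rfl; exact hx hj
        rw [h3 x fun hx' => hx (mem_of_mem_erase hx'), hs x e]

def box (k : ℕ) (J : Finset (Fin N)) : Finset (Fin N → ℕ) :=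
  Fintype.piFinset fun j => if j ∈ J then range k else {0}

lemma mem_box {k : ℕ} {J : Finset (Fin N)} {a : Fin N → ℕ} :
    a ∈ box k J ↔ (∀ j ∈ J, a j < k) ∧ ∀ j, j ∉ J → a j = 0 := by
  simp only [box, Fintype.mem_piFinset]
  constructor
  · intro h
    exact ⟨fun j hj => by simpa [hj] using h j, fun j hj => by simpa [hj] using h j⟩
  · rintro ⟨h1, h2⟩ j
    by_cases hj : j ∈ J
    · simpa [hj] using h1 j hj
    · simpa [hj] using h2 j hj

lemma tele (k : ℕ) (g : ℕ → Chain) : ∑ m ∈ range k, (g m + g (m + 1)) = g 0 + g k := by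
  induction k with
  | zero => simp [two_zero]
  | succ k ih =>
    rw [sum_range_succ, ih]
    calc g 0 + g k + (g k + g (k+1)) = g 0 + g (k+1) + (g k + g k) := by abel
      _ = _ := by rw [two_zero, add_zero]

lemma box_tele (k : ℕ) (J : Finset (Fin N)) (j : Fin N) (hj : j ∈ J)
    (f : (Fin N → ℕ) → Chain) :
    ∑ a ∈ box k J, (f a + f (step a j)) =
      ∑ b ∈ box k (J.erase j), (f b + f (Function.update b j k)) := by
  have e : ∑ a ∈ box k J, (f a + f (step a j)) = ∑ b ∈ box k (J.erase j), ∑ m ∈ range k,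
      (f (Function.update b j m) + f (Function.update b j (m+1))) := by
    rw [← sum_product']
    refine sum_nbij' (fun a => (Function.update a j 0, a j))
      (fun p => Function.update p.1 j p.2) ?_ ?_ ?_ ?_ ?_
    · intro a ha
      rw [mem_box] at ha
      simp only [mem_product, mem_box, mem_range]
      refine ⟨⟨fun x hx => ?_, fun x hx => ?_⟩, ha.1 j hj⟩
      · rw [Function.update_of_ne (ne_of_mem_erase hx)]; exact ha.1 x (mem_of_mem_erase hx)
      · by_cases hxj : x = j
        · subst hxj; simp
        · rw [Function.update_of_ne hxj]; exact ha.2 x fun h => hx (mem_erase.2 ⟨hxj, h⟩)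
    · rintro ⟨b, m⟩ h
      simp only [mem_product, mem_box, mem_range] at h
      rw [mem_box]
      refine ⟨fun x hx => ?_, fun x hx => ?_⟩
      · by_cases hxj : x = j
        · subst hxj; simpa using h.2
        · simp only [Function.update_of_ne hxj]; exact h.1.1 x (mem_erase.2 ⟨hxj, hx⟩)
      · have hxj : x ≠ j := by rintro rfl; exact hx hj
        simp only [Function.update_of_ne hxj]; exact h.1.2 x fun h => hx (mem_of_mem_erase h)
    · intro a _; simp
    · rintro ⟨b, m⟩ h
      simp only [mem_product, mem_box, mem_range] at h
      have := h.1.2 j (by simp)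
      simp [← this]
    · intro a _
      have : step a j = Function.update a j (a j + 1) := by
        funext x; by_cases hx : x = j
        · subst hx; simp [step]
        · simp [step, hx]
      simp [this]
  rw [e]
  refine sum_congr rfl fun b hb => ?_
  rw [tele k (fun m => f (Function.update b j m))]
  have : Function.update b j 0 = b := by
    rw [← (mem_box.1 hb).2 j (by simp)]; simp
  rw [this]

def dirs (N d : ℕ) : Finset (Fin N) := univ.filter fun j => (j : ℕ) < d

lemma dirs_erase (d : ℕ) (hd : d < N) : (dirs N (d+1)).erase ⟨d, hd⟩ = dirs N d := by
  ext x; simp [dirs, Fin.ext_iff]; omega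

lemma dirs_card (d : ℕ) : d ≤ N → (dirs N d).card = d := by
  induction d with
  | zero => intro _; simp [dirs]
  | succ d ih =>
    intro h
    have h1 := ih (by omega)
    rw [← dirs_erase d h, card_erase_of_mem (by simp [dirs])] at h1
    have : 0 < (dirs N (d+1)).card := card_pos.2 ⟨⟨d, h⟩, by simp [dirs]⟩
    omega

lemma count (k : ℕ) (hk : 0 < k) (l : (Fin N → ℕ) → ℕ) (hl : ∀ a, l a < N + 1)
    (h0 : ∀ p : Fin N → ℕ, (∀ j, p j ≤ k) → ∀ j : Fin N, p j = 0 → l p ≠ j + 1)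
    (h1 : ∀ p : Fin N → ℕ, (∀ j, p j ≤ k) → ∀ j : Fin N, p j = k → (j : ℕ) < l p) (d : ℕ) :
    d ≤ N → (∑ a ∈ box k (dirs N d), ch l d a (dirs N d)) (range (d + 1)) = 1 := by
  induction d with
  | zero =>
    intro _
    have hb : box k (dirs N 0) = {(0 : Fin N → ℕ)} := by
      ext a; rw [mem_box]; simp [dirs, funext_iff]
    have hl0 : l 0 = 0 := by
      by_contra hne
      have := hl 0
      exact h0 0 (fun _ => Nat.zero_le _) ⟨l 0 - 1, by omega⟩ rfl (by simp; omega)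
    rw [hb, sum_singleton]
    simp [ch, wed, unitC, hl0]
  | succ d ih =>
    intro hd
    have ih := ih (by omega)
    set J := dirs N (d+1) with hJ
    have hcard : J.card = d + 1 := dirs_card (d+1) hd
    set T := ∑ a ∈ box k J, ch l (d+1) a J with hT
    have hbd : bd (N+1) T = ∑ j ∈ J, ∑ b ∈ box k (J.erase j),
        (ch l d b (J.erase j) + ch l d (Function.update b j k) (J.erase j)) := by
      rw [hT, bd_sum]
      simp only [bd_ch (N+1) l hl d _ J hcard, bnd]
      rw [sum_comm]
      refine sum_congr rfl fun j hj => ?_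
      exact box_tele k J j hj (fun a => ch l d a (J.erase j))
    -- vanishing of the far faces
    have far : ∀ j ∈ J, ∀ b ∈ box k (J.erase j),
        ch l d (Function.update b j k) (J.erase j) (range (d+1)) = 0 := by
      intro j hj b hb
      rw [mem_box] at hb
      by_contra hne
      obtain ⟨v, v1, v2, v3, v4⟩ := ch_supp l d _ _ _ hne 0 (by simp)
      have hvj : v j = k := by rw [v3 j (by simp)]; simp
      have := h1 v (fun x => ?_) j hvj
      · omega
      · by_cases hx : x = j
        · subst hx; omega
        · by_cases hxJ : x ∈ J
          · have a1 := v2 x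
            rw [Function.update_of_ne hx] at a1
            have := hb.1 x (mem_erase.2 ⟨hx, hxJ⟩); omega
          · rw [v3 x fun h => hxJ (mem_of_mem_erase h), Function.update_of_ne hx,
              hb.2 x fun h => hxJ (mem_of_mem_erase h)]; omega
    have near : ∀ j ∈ J, j ≠ ⟨d, hd⟩ → ∀ b ∈ box k (J.erase j),
        ch l d b (J.erase j) (range (d+1)) = 0 := by
      intro j hj hjd b hb
      rw [mem_box] at hb
      by_contra hne
      have hjd' : (j : ℕ) < d := by
        have : (j : ℕ) < d + 1 := by simpa [hJ, dirs] using hj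
        have : (j : ℕ) ≠ d := fun e => hjd (Fin.ext e)
        omega
      obtain ⟨v, v1, v2, v3, v4⟩ := ch_supp l d _ _ _ hne (j+1) (by simp; omega)
      have hvj : v j = 0 := by rw [v3 j (by simp), hb.2 j (by simp)]
      refine h0 v (fun x => ?_) j hvj v4
      by_cases hx : x ∈ J.erase j
      · have := v2 x; have := hb.1 x hx; omega
      · rw [v3 x hx, hb.2 x hx]; omega
    have e1 : bd (N+1) T (range (d+1)) = 1 := by
      rw [hbd, Finset.sum_apply, sum_eq_single (⟨d, hd⟩ : Fin N)]
      · rw [Finset.sum_apply, ← ih, Finset.sum_apply, hJ, dirs_erase]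
        refine sum_congr rfl fun b hb => ?_
        have := far ⟨d, hd⟩ (by simp [hJ, dirs]) b (by rw [hJ, dirs_erase]; exact hb)
        rw [hJ, dirs_erase] at this
        rw [Pi.add_apply, this, add_zero]
      · intro j hj hjd
        rw [Finset.sum_apply]
        refine sum_eq_zero fun b hb => ?_
        rw [Pi.add_apply, far j hj b hb, near j hj hjd b hb, add_zero]
      · intro h; exact absurd (by simp [hJ, dirs]) h
    rw [← e1, bd, sum_eq_single (d+1)]
    · rw [← range_add_one]
    · intro i hi hne
      rw [hT, Finset.sum_apply]
      refine sum_eq_zero fun b hb => ?_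
      rw [mem_box] at hb
      by_contra hne'
      obtain ⟨v, v1, v2, v3, v4⟩ := ch_supp l _ _ _ _ hne' i (by simp)
      simp only [mem_sdiff, mem_range] at hi
      have hin : i - 1 < N := by omega
      have hnJ : (⟨i-1, hin⟩ : Fin N) ∉ J := by simp [hJ, dirs]; omega
      refine h0 v (fun x => ?_) ⟨i-1, hin⟩ ?_ ?_
      · by_cases hx : x ∈ J
        · have := v2 x; have := hb.1 x hx; omega
        · rw [v3 x hx, hb.2 x hx]; omega
      · rw [v3 _ hnJ, hb.2 _ hnJ]
      · simp; omega
    · intro h; simp at h; omega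

lemma kuhn (k : ℕ) (hk : 0 < k) (l : (Fin N → ℕ) → ℕ) (hl : ∀ a, l a < N + 1)
    (h0 : ∀ p : Fin N → ℕ, (∀ j, p j ≤ k) → ∀ j : Fin N, p j = 0 → l p ≠ j + 1)
    (h1 : ∀ p : Fin N → ℕ, (∀ j, p j ≤ k) → ∀ j : Fin N, p j = k → (j : ℕ) < l p) :
    ∃ a : Fin N → ℕ, (∀ j, a j < k) ∧ ∀ i ≤ N, ∃ v : Fin N → ℕ,
      (∀ j, a j ≤ v j) ∧ (∀ j, v j ≤ a j + 1) ∧ l v = i := by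
  have h := count k hk l hl h0 h1 N le_rfl
  rw [Finset.sum_apply] at h
  obtain ⟨a, ha, hne⟩ := exists_ne_zero_of_sum_ne_zero (h.symm ▸ one_ne_zero)
  refine ⟨a, fun j => (mem_box.1 ha).1 j (by simp [dirs]), fun i hi => ?_⟩
  obtain ⟨v, v1, v2, v3, v4⟩ := ch_supp l _ _ _ _ hne i (by simp; omega)
  exact ⟨v, v1, v2, v4⟩


lemma kkm (G : ℕ → Set (Fin N → ℝ)) (hG : ∀ i, IsOpen (G i))
    (hcov : ∀ t ∈ Set.Icc (0 : Fin N → ℝ) 1, ∃ i ≤ N, t ∈ G i)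
    (h0 : ∀ t ∈ Set.Icc (0 : Fin N → ℝ) 1, ∀ j : Fin N, t j = 0 → t ∉ G (j + 1))
    (h1 : ∀ t ∈ Set.Icc (0 : Fin N → ℝ) 1, ∀ j : Fin N, t j = 1 → ∀ i ≤ (j : ℕ), t ∉ G i) :
    ∃ t ∈ Set.Icc (0 : Fin N → ℝ) 1, ∀ i ≤ N, t ∈ G i := by
  obtain ⟨δ, hδ, hleb⟩ := lebesgue_number_lemma_of_metric
    (s := Set.Icc (0 : Fin N → ℝ) 1) (c := fun i : Fin (N+1) => G i) isCompact_Icc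
    (fun i => hG i) (fun t ht => by
      obtain ⟨i, hi, h⟩ := hcov t ht
      exact Set.mem_iUnion.2 ⟨⟨i, by omega⟩, h⟩)
  obtain ⟨k', hk'⟩ := exists_nat_one_div_lt hδ
  set k := k' + 1 with hkdef
  have hk : (0 : ℝ) < k := by simp [hkdef]; positivity
  have hkδ : 1 / (k : ℝ) < δ := by simpa [hkdef] using hk'
  let pt : (Fin N → ℕ) → (Fin N → ℝ) := fun p j => (p j : ℝ) / k
  have hpt : ∀ p : Fin N → ℕ, (∀ j, p j ≤ k) → pt p ∈ Set.Icc (0 : Fin N → ℝ) 1 := by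
    intro p hp
    refine ⟨fun j => by simp only [pt, Pi.zero_apply]; positivity, fun j => ?_⟩
    simp only [pt, Pi.one_apply]
    rw [div_le_one hk]
    exact_mod_cast hp j
  have hex : ∀ p : Fin N → ℕ, ∃ i : ℕ, i < N + 1 ∧
      ((∀ j, p j ≤ k) → Metric.ball (pt p) δ ⊆ G i) := by
    intro p
    by_cases hp : ∀ j, p j ≤ k
    · obtain ⟨i, hi⟩ := hleb (pt p) (hpt p hp)
      exact ⟨i, i.2, fun _ => hi⟩
    · exact ⟨0, by omega, fun h => absurd h hp⟩
  choose l hl hlG using hex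
  have hmem : ∀ p : Fin N → ℕ, (∀ j, p j ≤ k) → pt p ∈ G (l p) := fun p hp =>
    hlG p hp (Metric.mem_ball_self hδ)
  obtain ⟨a, ha, hv⟩ := kuhn k (by omega) l hl
    (fun p hp j hj e => h0 (pt p) (hpt p hp) j (by simp [pt, hj]) (e ▸ hmem p hp))
    (fun p hp j hj => by
      by_contra hlt
      exact h1 (pt p) (hpt p hp) j (by simp only [pt, hj]; exact div_self hk.ne') (l p)
        (by omega) (hmem p hp))
  refine ⟨pt a, hpt a fun j => (ha j).le, fun i hi => ?_⟩
  obtain ⟨v, v1, v2, v3⟩ := hv i hi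
  have hvk : ∀ j, v j ≤ k := fun j => by have := v2 j; have := ha j; omega
  rw [← v3]
  refine hlG v hvk ?_
  rw [Metric.mem_ball]
  refine lt_of_le_of_lt ?_ hkδ
  rw [dist_pi_le_iff (by positivity)]
  intro j
  simp only [pt]
  rw [Real.dist_eq, ← sub_div, abs_div, abs_of_pos hk]
  gcongr
  have q1 : (a j : ℝ) ≤ v j := by exact_mod_cast v1 j
  have q2 : (v j : ℝ) ≤ a j + 1 := by exact_mod_cast v2 j
  rw [abs_le]; constructor <;> linarith

section Geo

variable {X : Type} [MetricSpace X]

def cone (γ : X → X → ℝ → X) (p : ℕ → X) : ℕ → (ℕ → ℝ) → X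
  | 0, _ => p 0
  | d + 1, t => γ (cone γ p d t) (p (d + 1)) (t d)

lemma cone_cont (γ : X → X → ℝ → X)
    (hγ : Continuous fun p : X × X × ℝ => γ p.1 p.2.1 p.2.2) (p : ℕ → X) (d : ℕ) :
    Continuous (cone γ p d) := by
  induction d with
  | zero => exact continuous_const
  | succ d ih =>
    exact hγ.comp (ih.prodMk (continuous_const.prodMk (continuous_apply d)))

lemma cone_mem (γ : X → X → ℝ → X) (p : ℕ → X) (A : Set X)
    (hA : ∀ x ∈ A, ∀ y ∈ A, ∀ t ∈ Set.Icc (0:ℝ) 1, γ x y t ∈ A)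
    (t : ℕ → ℝ) (ht : ∀ j, t j ∈ Set.Icc (0:ℝ) 1) (d : ℕ) :
    (∀ j ≤ d, p j ∈ A) → cone γ p d t ∈ A := by
  induction d with
  | zero => intro h; exact h 0 le_rfl
  | succ d ih =>
    intro h
    exact hA _ (ih fun j hj => h j (by omega)) _ (h _ le_rfl) _ (ht d)

lemma cone_face (γ : X → X → ℝ → X) (hγ0 : ∀ x y : X, γ x y 0 = x)
    (hγ1 : ∀ x y : X, γ x y 1 = y) (p : ℕ → X) (A : Set X)
    (hA : ∀ x ∈ A, ∀ y ∈ A, ∀ t ∈ Set.Icc (0:ℝ) 1, γ x y t ∈ A)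
    (t : ℕ → ℝ) (ht : ∀ j, t j ∈ Set.Icc (0:ℝ) 1) (i d : ℕ) :
    i ≤ d → (∀ j ≤ d, j ≠ i → p j ∈ A) →
    ((∃ j, i = j + 1 ∧ t j = 0) ∨ ∃ j, i ≤ j ∧ j < d ∧ t j = 1) → cone γ p d t ∈ A := by
  induction d with
  | zero =>
    rintro hi _ (⟨j, h, _⟩ | ⟨j, _, h, _⟩) <;> omega
  | succ d ih =>
    intro hi hp hf
    rw [cone]
    rcases Nat.lt_or_ge d i with h | h
    · have hid : i = d + 1 := by omega
      rcases hf with ⟨j, h, h'⟩ | ⟨j, h, h', _⟩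
      · have : j = d := by omega
        subst this
        rw [h', hγ0]
        exact cone_mem γ p A hA t ht j fun x hx => hp x (by omega) (by omega)
      · omega
    · by_cases hd : t d = 1
      · rw [hd, hγ1]; exact hp _ le_rfl (by omega)
      · refine hA _ (ih h (fun j hj hne => hp j (by omega) hne) ?_) _
          (hp _ le_rfl (by omega)) _ (ht d)
        rcases hf with h | ⟨j, h1, h2, h3⟩
        · exact Or.inl h
        · refine Or.inr ⟨j, h1, ?_, h3⟩
          have : j ≠ d := by rintro rfl; exact hd h3
          omega

lemma helly_step (γ : X → X → ℝ → X)
    (hγcont : Continuous fun p : X × X × ℝ => γ p.1 p.2.1 p.2.2)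
    (hγ0 : ∀ x y : X, γ x y 0 = x) (hγ1 : ∀ x y : X, γ x y 1 = y)
    (n : ℕ) (hdim : CompactTopDimLE X n) (N : ℕ) (hN : n + 1 ≤ N) (A : ℕ → Set X)
    (hconv : ∀ i, ∀ x ∈ A i, ∀ y ∈ A i, ∀ t ∈ Set.Icc (0:ℝ) 1, γ x y t ∈ A i)
    (p : ℕ → X) (hp : ∀ i ≤ N, ∀ j ≤ N, j ≠ i → p j ∈ A i) :
    ∃ x, ∀ i ≤ N, x ∈ A i := by
  by_contra hno
  push Not at hno
  let ex : (Fin N → ℝ) → ℕ → ℝ := fun t j => if h : j < N then t ⟨j, h⟩ else 0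
  have hex : Continuous ex := by
    refine continuous_pi fun j => ?_
    by_cases h : j < N
    · simp only [ex, h, dif_pos]; exact continuous_apply _
    · simp only [ex, h, dif_neg, not_false_eq_true]; exact continuous_const
  let f : (Fin N → ℝ) → X := fun t => cone γ p N (ex t)
  have hf : Continuous f := (cone_cont γ hγcont p N).comp hex
  let cube := Set.Icc (0 : Fin N → ℝ) 1
  let F : ℕ → Set (Fin N → ℝ) := fun i =>
    {t | (∃ j : Fin N, i = j + 1 ∧ t j = 0) ∨ ∃ j : Fin N, i ≤ j ∧ t j = 1}
  have hFc : ∀ i, IsClosed (F i) := by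
    intro i
    simp only [F, Set.ofPred_or, Set.ofPred_exists, Set.ofPred_and]
    refine IsClosed.union ?_ ?_ <;> refine isClosed_iUnion_of_finite fun j => ?_
    · exact isClosed_const.inter (isClosed_eq (continuous_apply j) continuous_const)
    · exact isClosed_const.inter (isClosed_eq (continuous_apply j) continuous_const)
  have hCA : ∀ i ≤ N, f '' (cube ∩ F i) ⊆ A i := by
    rintro i hi _ ⟨t, ⟨htc, htF⟩, rfl⟩
    refine cone_face γ hγ0 hγ1 p (A i) (hconv i) (ex t) (fun j => ?_) i N hi (hp i hi) ?_
    · by_cases h : j < N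
      · simp only [ex, h, dif_pos]; exact ⟨htc.1 _, htc.2 _⟩
      · simp [ex, h]
    · rcases htF with ⟨j, h1, h2⟩ | ⟨j, h1, h2⟩
      · exact Or.inl ⟨j, h1, by simpa [ex] using h2⟩
      · exact Or.inr ⟨j, h1, j.2, by simpa [ex] using h2⟩
  have hCcl : ∀ i, IsClosed (f '' (cube ∩ F i)) := fun i =>
    ((isCompact_Icc.inter_right (hFc i)).image hf).isClosed
  obtain ⟨κ, V, hVo, hVc, hVr, hVm⟩ := hdim (f '' cube) (isCompact_Icc.image hf) (Fin (N+1))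
    (fun i => (f '' (cube ∩ F i))ᶜ) (fun i => (hCcl i).isOpen_compl) (by
      intro x _
      obtain ⟨i, hi, hx⟩ := hno x
      exact Set.mem_iUnion.2 ⟨⟨i, by omega⟩, fun h => hx (hCA i hi h)⟩)
  choose φ hφ using hVr
  have hmiss : ∀ t ∈ cube, ∀ i, t ∈ F i → ∀ j, (φ j : ℕ) = i → f t ∉ V j := by
    intro t ht i hF j hj hV
    refine hφ j hV ⟨t, ⟨ht, ?_⟩, rfl⟩
    rw [hj]; exact hF
  obtain ⟨t, ht, hall⟩ := kkm (fun i => ⋃ j, ⋃ _ : (φ j : ℕ) = i, f ⁻¹' V j)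
    (fun i => isOpen_iUnion fun j => isOpen_iUnion fun _ => (hVo j).preimage hf)
    (fun t ht => by
      obtain ⟨j, hj⟩ := Set.mem_iUnion.1 (hVc ⟨t, ht, rfl⟩)
      refine ⟨φ j, by have := (φ j).2; omega, ?_⟩
      simp only [Set.mem_iUnion]
      exact ⟨j, rfl, hj⟩)
    (fun t ht j hj h => by
      simp only [Set.mem_iUnion] at h
      obtain ⟨x, hx, hV⟩ := h
      exact hmiss t ht _ (Or.inl ⟨j, rfl, hj⟩) x hx hV)
    (fun t ht j hj i hi h => by
      simp only [Set.mem_iUnion] at h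
      obtain ⟨x, hx, hV⟩ := h
      exact hmiss t ht _ (Or.inr ⟨j, hi, hj⟩) x hx hV)
  obtain ⟨s, hs, hsV⟩ := hVm (f t) ⟨t, ht, rfl⟩
  simp only [Set.mem_iUnion] at hall
  have hsub : (univ : Finset (Fin (N+1))) ⊆ s.image φ := by
    intro i _
    obtain ⟨j, hj, hV⟩ := hall i (by omega)
    exact mem_image.2 ⟨j, hsV j hV, Fin.ext hj⟩
  have := (card_le_card hsub).trans card_image_le
  simp at this
  omega

end Geo

end HellyAux


/-- Helly's theorem for convex sets in a uniquely geodesic space of compact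
topological dimension at most `n`. -/
theorem helly_uniquely_geodesic {X : Type} [MetricSpace X]
    (γ : X → X → ℝ → X)
    (hγcont : Continuous fun p : X × X × ℝ => γ p.1 p.2.1 p.2.2)
    (hγ0 : ∀ x y : X, γ x y 0 = x)
    (hγ1 : ∀ x y : X, γ x y 1 = y)
    (hγdist : ∀ x y : X, ∀ s ∈ Set.Icc (0:ℝ) 1, ∀ t ∈ Set.Icc (0:ℝ) 1,
      dist (γ x y s) (γ x y t) = |s - t| * dist x y)
    (hγuniq : ∀ x y : X, ∀ φ : ℝ → X,
      (∀ s ∈ Set.Icc (0:ℝ) (dist x y), ∀ t ∈ Set.Icc (0:ℝ) (dist x y),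
        dist (φ s) (φ t) = |s - t|) →
      φ 0 = x → φ (dist x y) = y →
      φ '' Set.Icc (0:ℝ) (dist x y) = (fun t => γ x y t) '' Set.Icc (0:ℝ) 1)
    (n : ℕ) (hdim : CompactTopDimLE X n)
    (m : ℕ) (A : Fin m → Set X)
    (hconv : ∀ i : Fin m, ∀ x ∈ A i, ∀ y ∈ A i, ∀ t ∈ Set.Icc (0:ℝ) 1,
      γ x y t ∈ A i)
    (hinter : ∀ s : Finset (Fin m), s.card ≤ n + 1 → (⋂ i ∈ s, A i).Nonempty) :
    (⋂ i, A i).Nonempty := by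
  classical
  have key : ∀ c : ℕ, ∀ s : Finset (Fin m), s.card = c → (⋂ i ∈ s, A i).Nonempty := by
    intro c
    induction c with
    | zero => intro s hs; exact hinter s (by omega)
    | succ d ih =>
      intro s hs
      rcases Nat.lt_or_ge d (n + 1) with h | h
      · exact hinter s (by omega)
      let e : s ≃ Fin (d + 1) := Finset.equivFinOfCardEq hs
      let σ : ℕ → Fin m := fun i => e.symm (Fin.ofNat (d + 1) i)
      have hσs : ∀ i, σ i ∈ s := fun i => (e.symm (Fin.ofNat (d + 1) i)).2
      have hσi : ∀ i ≤ d, ∀ j ≤ d, σ i = σ j → i = j := by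
        intro i hi j hj hij
        have h1 := e.symm.injective (Subtype.ext hij)
        have h2 := congrArg Fin.val h1
        simp only [Fin.val_ofNat] at h2
        rwa [Nat.mod_eq_of_lt (by omega), Nat.mod_eq_of_lt (by omega)] at h2
      have hpx : ∀ j, ∃ x, ∀ i ∈ s.erase (σ j), x ∈ A i := by
        intro j
        obtain ⟨x, hx⟩ := ih (s.erase (σ j)) (by
          rw [Finset.card_erase_of_mem (hσs j), hs]; rfl)
        exact ⟨x, by simpa using hx⟩
      choose p hp using hpx
      obtain ⟨x, hx⟩ := HellyAux.helly_step γ hγcont hγ0 hγ1 n hdim d h (fun i => A (σ i))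
        (fun i => hconv (σ i)) p (fun i hi j hj hne =>
          hp j _ (Finset.mem_erase.2 ⟨fun he => hne (hσi i hi j hj he).symm, hσs i⟩))
      refine ⟨x, ?_⟩
      simp only [Set.mem_iInter]
      intro i hi
      have h3 := hx (e ⟨i, hi⟩) (by have := (e ⟨i, hi⟩).2; omega)
      have h4 : σ (e ⟨i, hi⟩) = i := by
        have : Fin.ofNat (d + 1) (e ⟨i, hi⟩ : ℕ) = e ⟨i, hi⟩ := by
          apply Fin.ext
          simp only [Fin.val_ofNat]
          exact Nat.mod_eq_of_lt (e ⟨i, hi⟩).2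
        simp only [σ, this, Equiv.symm_apply_apply]
      simpa only [h4] using h3
  obtain ⟨x, hx⟩ := key _ Finset.univ rfl
  exact ⟨x, by simpa using hx⟩
end

section
/- Let n ≥ 1, let Δ denote the standard (n+1)-dimensional simplex, i.e., the convex hull of the standard basis vectors e₁, …, e_{n+2} of ℝ^{n+2}, and let F_i denote its i-th n-dimensional face, the set of points of Δ whose i-th coordinate is zero. Let X be a Hausdorff topological space of compact topological dimension at most n, i.e., for every compact subset K of X, every open cover of K admits an open refinement covering K in which every point of K belongs to at most n + 1 members. Then for every continuous map f : Δ → X, the intersection ⋂_{i=1}^{n+2} f(F_i) of the images of the n + 2 faces is nonempty. -/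
namespace ScarfAux
open Classical Finset

variable {I T : Type}

/-- Dominance of a finite set with respect to the orders given by the functions `p i`. -/
def Dom (p : I → T → ℤ) (σ : Finset T) : Prop := ∀ y, ∃ i, ∀ x ∈ σ, p i y ≤ p i x

lemma Dom.mono {p : I → T → ℤ} {σ τ : Finset T} (h : Dom p σ) (hs : τ ⊆ σ) : Dom p τ := by
  intro y
  obtain ⟨i, hi⟩ := h y
  exact ⟨i, fun x hx => hi x (hs hx)⟩

variable [Fintype I] [Fintype T]

/-- The doors of type `i0` inside a set which is not fully coloured are even in number. -/
lemma even_doors (c : T → I) (i0 : I) (σ : Finset T) (hσ : σ.card = Fintype.card I)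
    (hne : σ.image c ≠ univ) :
    Even ((univ.filter fun τ : Finset T => τ ⊆ σ ∧ τ.card + 1 = Fintype.card I ∧
      τ.image c = univ.erase i0).card) := by
  by_cases hE : ∃ τ : Finset T, τ ⊆ σ ∧ τ.card + 1 = Fintype.card I ∧ τ.image c = univ.erase i0
  swap
  · rw [Finset.filter_eq_empty_iff.2]
    · simp
    · intro τ _ h
      exact hE ⟨τ, h⟩
  obtain ⟨τ, hτσ, hcard, him⟩ := hE
  have hinj : Set.InjOn c τ := by
    apply Finset.card_image_iff.1
    rw [him, Finset.card_erase_of_mem (mem_univ _), Finset.card_univ]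
    omega
  obtain ⟨x, hxτ, rfl⟩ : ∃ x, x ∉ τ ∧ insert x τ = σ := by
    have h1 : (σ \ τ).card = 1 := by
      rw [Finset.card_sdiff_of_subset hτσ]; omega
    obtain ⟨x, hx⟩ := Finset.card_eq_one.1 h1
    have hx' : x ∈ σ \ τ := by rw [hx]; simp
    refine ⟨x, (mem_sdiff.1 hx').2, ?_⟩
    rw [Finset.insert_eq, ← hx, Finset.sdiff_union_of_subset hτσ]
  have hcx : c x ≠ i0 := by
    intro h
    apply hne
    rw [Finset.image_insert, him, h, Finset.insert_erase (mem_univ _)]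
  have hcx' : c x ∈ τ.image c := by rw [him]; simp [hcx]
  obtain ⟨x', hx'τ, hx'c⟩ := Finset.mem_image.1 hcx'
  have hxx' : x ≠ x' := fun h => hxτ (h ▸ hx'τ)
  have key : (univ.filter fun τ' : Finset T => τ' ⊆ insert x τ ∧ τ'.card + 1 = Fintype.card I ∧
      τ'.image c = univ.erase i0) = {τ, (insert x τ).erase x'} := by
    ext τ'
    simp only [mem_filter, mem_univ, true_and, mem_insert, mem_singleton]
    constructor
    · rintro ⟨h1, h2, h3⟩
      have h4 : (insert x τ \ τ').card = 1 := by
        rw [Finset.card_sdiff_of_subset h1]; omega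
      obtain ⟨z, hz⟩ := Finset.card_eq_one.1 h4
      have hz' : z ∈ insert x τ \ τ' := by rw [hz]; simp
      have h5 : τ' = (insert x τ).erase z := by
        rw [← Finset.sdiff_singleton_eq_erase, ← hz, Finset.sdiff_sdiff_eq_self h1]
      by_cases hzx : z = x
      · left
        rw [h5, hzx, Finset.erase_insert hxτ]
      by_cases hzx' : z = x'
      · right
        rw [h5, hzx']
      exfalso
      have hzτ : z ∈ τ := by
        rcases mem_insert.1 (mem_sdiff.1 hz').1 with h | h
        · exact absurd h hzx
        · exact h
      have h6 : c z ∈ τ'.image c := by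
        rw [h3, ← him]; exact mem_image_of_mem _ hzτ
      obtain ⟨w, hw, hwc⟩ := mem_image.1 h6
      rw [h5] at hw
      obtain ⟨hwz, hw⟩ := mem_erase.1 hw
      rcases mem_insert.1 hw with h | h
      · subst h
        exact hzx' (hinj hzτ hx'τ (by rw [hx'c, hwc]))
      · exact hwz (hinj h hzτ hwc)
    · rintro (rfl | rfl)
      · exact ⟨hτσ, hcard, him⟩
      · refine ⟨erase_subset _ _, ?_, ?_⟩
        · rw [Finset.card_erase_of_mem (by simp [hx'τ]), Finset.card_insert_of_notMem hxτ]
          simpa using hcard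
        · rw [← him]
          ext k
          simp only [mem_image, mem_erase, mem_insert]
          constructor
          · rintro ⟨w, ⟨hw1, rfl | hw2⟩, rfl⟩
            · exact ⟨x', hx'τ, hx'c⟩
            · exact ⟨w, hw2, rfl⟩
          · rintro ⟨w, hw, rfl⟩
            by_cases hwx : w = x'
            · exact ⟨x, ⟨hxx', Or.inl rfl⟩, by rw [hwx, hx'c]⟩
            · exact ⟨w, ⟨hwx, Or.inr hw⟩, rfl⟩
  rw [key, Finset.card_pair]
  · exact even_two
  · intro h
    have : x' ∈ (insert x τ).erase x' := h ▸ hx'τ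
    simp at this

/-- Each inner door lies in exactly two rooms. -/
lemma even_rooms (p : I → T → ℤ) (hp : ∀ i, Function.Injective (p i)) (τ : Finset T)
    (hτ : τ.Nonempty) (hcard : τ.card + 1 = Fintype.card I) (hdom : Dom p τ)
    (hS : ∀ k, ∃ y, ∀ l, l ≠ k → ∃ x ∈ τ, p l x < p l y) :
    Even ((univ.filter fun σ : Finset T => τ ⊆ σ ∧ σ.card = Fintype.card I ∧ Dom p σ).card) := by
  have hm : ∀ i, ∃ x ∈ τ, ∀ y ∈ τ, p i x ≤ p i y := fun i => exists_min_image τ (p i) hτ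
  choose m hmτ hmle using hm
  have hsurj : ∀ y ∈ τ, ∃ i, m i = y := by
    intro y hy
    obtain ⟨i, hi⟩ := hdom y
    exact ⟨i, hp i (le_antisymm (hmle i y hy) (hi _ (hmτ i)))⟩
  obtain ⟨i, -, j, -, hij, hmij⟩ := Finset.exists_ne_map_eq_of_card_lt_of_maps_to
    (s := (univ : Finset I)) (t := τ) (f := m) (by rw [Finset.card_univ]; omega)
    (fun a _ => hmτ a)
  -- removing one of the two indices keeps surjectivity
  have hsurj' : ∀ k, (k = i ∨ k = j) → ∀ y ∈ τ, ∃ l, l ≠ k ∧ m l = y := by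
    intro k hk y hy
    obtain ⟨l, hl⟩ := hsurj y hy
    by_cases hlk : l = k
    · rcases hk with rfl | rfl
      · exact ⟨j, hij.symm, by rw [← hmij, ← hlk, hl]⟩
      · exact ⟨i, hij, by rw [hmij, ← hlk, hl]⟩
    · exact ⟨l, hlk, hl⟩
  let S : I → Finset T := fun k => univ.filter fun y => ∀ l, l ≠ k → p l (m l) < p l y
  have hSmem : ∀ k y, y ∈ S k ↔ ∀ l, l ≠ k → p l (m l) < p l y := by
    intro k y; simp [S]
  have hSne : ∀ k, (S k).Nonempty := by
    intro k
    obtain ⟨y, hy⟩ := hS k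
    refine ⟨y, (hSmem k y).2 fun l hl => ?_⟩
    obtain ⟨x, hx, hxy⟩ := hy l hl
    exact (hmle l x hx).trans_lt hxy
  have hmax : ∀ k, ∃ y ∈ S k, ∀ z ∈ S k, p k z ≤ p k y := fun k =>
    exists_max_image (S k) (p k) (hSne k)
  choose Y hYS hYmax using hmax
  have hSτ : ∀ k, (k = i ∨ k = j) → ∀ y ∈ S k, y ∉ τ := by
    intro k hk y hy hyτ
    obtain ⟨l, hlk, rfl⟩ := hsurj' k hk y hyτ
    exact lt_irrefl _ ((hSmem k _).1 hy l hlk)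
  have hSle : ∀ k y, y ∈ S k → p k y ≤ p k (m k) := by
    intro k y hy
    obtain ⟨l, hl⟩ := hdom y
    by_cases hlk : l = k
    · subst hlk; exact hl _ (hmτ l)
    · exact absurd (hl _ (hmτ l)) (not_le.2 ((hSmem k y).1 hy l hlk))
  have key : (univ.filter fun σ : Finset T => τ ⊆ σ ∧ σ.card = Fintype.card I ∧ Dom p σ)
      = {insert (Y i) τ, insert (Y j) τ} := by
    ext σ
    simp only [mem_filter, mem_univ, true_and, mem_insert, mem_singleton]
    constructor
    · rintro ⟨h1, h2, h3⟩
      have h4 : (σ \ τ).card = 1 := by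
        rw [Finset.card_sdiff_of_subset h1]; omega
      obtain ⟨y, hy⟩ := Finset.card_eq_one.1 h4
      have hy' : y ∈ σ \ τ := by rw [hy]; simp
      have hyτ := (mem_sdiff.1 hy').2
      have hσ : σ = insert y τ := by
        rw [Finset.insert_eq, ← hy, Finset.sdiff_union_of_subset h1]
      subst hσ
      obtain ⟨k, hk⟩ := h3 y
      -- every element of `τ` is the minimum for an index
      have hq : ∀ x : τ, ∃ l, ∀ z ∈ insert y τ, p l x ≤ p l z := fun x => h3 x
      choose q hq using hq
      have hmq : ∀ x : τ, m (q x) = x := fun x =>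
        hp (q x) (le_antisymm (hmle _ _ x.2) (hq x _ (mem_insert_of_mem (hmτ _))))
      have hqk : ∀ x, q x ≠ k := by
        intro x h
        have e1 := hq x y (mem_insert_self _ _)
        have e2 := hk x (mem_insert_of_mem x.2)
        rw [h] at e1
        exact hyτ (hp k (le_antisymm e2 e1) ▸ x.2)
      have hqinj : Function.Injective q := by
        intro a b hab
        apply Subtype.ext
        rw [← hmq a, ← hmq b, hab]
      have hqim : univ.image q = univ.erase k := by
        apply Finset.eq_of_subset_of_card_le
        · intro l hl
          obtain ⟨x, -, rfl⟩ := mem_image.1 hl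
          simp [hqk]
        · rw [Finset.card_image_of_injective _ hqinj, Finset.card_erase_of_mem (mem_univ _),
            Finset.card_univ, Finset.card_univ, Fintype.card_coe]
          omega
      have hql : ∀ l, l ≠ k → ∃ x, q x = l := by
        intro l hl
        have : l ∈ univ.image q := by rw [hqim]; simp [hl]
        obtain ⟨x, -, hx⟩ := mem_image.1 this
        exact ⟨x, hx⟩
      have hyS : y ∈ S k := by
        rw [hSmem]
        intro l hl
        obtain ⟨x, rfl⟩ := hql l hl
        rw [hmq]
        refine lt_of_le_of_ne (hq x y (mem_insert_self _ _)) fun h => ?_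
        exact hyτ (hp _ h ▸ x.2)
      have hkij : k = i ∨ k = j := by
        by_contra hcon
        push Not at hcon
        obtain ⟨a, ha⟩ := hql i hcon.1.symm
        obtain ⟨b, hb⟩ := hql j hcon.2.symm
        have : a = b := by
          apply Subtype.ext
          rw [← hmq a, ← hmq b, ha, hb, hmij]
        exact hij (by rw [← ha, ← hb, this])
      have hyY : y = Y k := by
        obtain ⟨l, hl⟩ := h3 (Y k)
        by_cases hlk : l = k
        · subst hlk
          exact hp l (le_antisymm (hYmax l y hyS) (hl y (mem_insert_self _ _)))
        · exact absurd (hl _ (mem_insert_of_mem (hmτ l)))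
            (not_le.2 ((hSmem k _).1 (hYS k) l hlk))
      rcases hkij with rfl | rfl
      · left; rw [hyY]
      · right; rw [hyY]
    · intro h
      obtain ⟨k, hk, rfl⟩ : ∃ k, (k = i ∨ k = j) ∧ σ = insert (Y k) τ := by
        rcases h with h | h
        · exact ⟨i, Or.inl rfl, h⟩
        · exact ⟨j, Or.inr rfl, h⟩
      refine ⟨subset_insert _ _, ?_, ?_⟩
      · rw [Finset.card_insert_of_notMem (hSτ k hk _ (hYS k)), hcard]
      · intro z
        by_cases hz : z ∈ S k
        · refine ⟨k, fun x hx => ?_⟩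
          rcases mem_insert.1 hx with rfl | hx
          · exact hYmax k z hz
          · exact (hSle k z hz).trans (hmle k x hx)
        · rw [hSmem] at hz
          push Not at hz
          obtain ⟨l, hlk, hl⟩ := hz
          refine ⟨l, fun x hx => ?_⟩
          rcases mem_insert.1 hx with rfl | hx
          · exact hl.trans ((hSmem k _).1 (hYS k) l hlk).le
          · exact hl.trans (hmle l x hx)
  rw [key, Finset.card_pair]
  · exact even_two
  · intro h
    have h1 : Y i ∈ insert (Y j) τ := h ▸ mem_insert_self _ _
    rcases mem_insert.1 h1 with h1 | h1
    · have e1 := (hSmem i _).1 (hYS i)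
      have e2 := (hSmem j _).1 (hYS j)
      rw [h1] at e1
      obtain ⟨l, hl⟩ := hdom (Y j)
      have := hl _ (hmτ l)
      by_cases hli : l = i
      · exact absurd this (not_le.2 (e2 l (hli ▸ hij)))
      · exact absurd this (not_le.2 (e1 l hli))
    · exact hSτ i (Or.inl rfl) _ (hYS i) h1

theorem scarf [Nonempty I] (p : I → T → ℤ) (hp : ∀ i, Function.Injective (p i)) (c : T → I)
    (s : I → T)
    (hs1 : ∀ i t, t ≠ s i → p i (s i) < p i t)
    (hs2 : ∀ i j t, j ≠ i → (∀ k, t ≠ s k) → p i t < p i (s j))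
    (hc : ∀ i, c (s i) = i) (ht : ∃ t, ∀ k, t ≠ s k) :
    ∃ σ : Finset T, σ.card = Fintype.card I ∧ Dom p σ ∧ σ.image c = univ := by
  by_contra hcon
  push Not at hcon
  obtain ⟨i0⟩ := ‹Nonempty I›
  obtain ⟨t0, ht0⟩ := ht
  have hsinj : Function.Injective s := fun a b h => by rw [← hc a, ← hc b, h]
  have hcpos : 0 < Fintype.card I := Fintype.card_pos_iff.2 ⟨i0⟩
  let R : Finset (Finset T) := univ.filter fun σ => σ.card = Fintype.card I ∧ Dom p σ
  let D : Finset (Finset T) := univ.filter fun τ => (τ.card + 1 = Fintype.card I ∧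
    τ.image c = univ.erase i0) ∧ Dom p τ
  let τ0 : Finset T := (univ.erase i0).image s
  have hτ0card : τ0.card + 1 = Fintype.card I := by
    simp only [τ0]
    rw [Finset.card_image_of_injective _ hsinj, Finset.card_erase_of_mem (mem_univ _),
      Finset.card_univ]
    omega
  have hτ0mem : ∀ l, l ≠ i0 → s l ∈ τ0 := fun l hl => mem_image_of_mem _ (by simp [hl])
  have hs1' : ∀ i t, p i (s i) ≤ p i t := by
    intro i t
    by_cases h : t = s i
    · rw [h]
    · exact (hs1 i t h).le
  have hτ0D : τ0 ∈ D := by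
    simp only [D, mem_filter, mem_univ, true_and]
    refine ⟨⟨hτ0card, ?_⟩, ?_⟩
    · simp only [τ0]
      rw [Finset.image_image]
      have : c ∘ s = id := funext hc
      rw [this, Finset.image_id]
    · intro y
      by_cases hy : ∃ k, y = s k
      · obtain ⟨k, rfl⟩ := hy
        exact ⟨k, fun x _ => hs1' k x⟩
      · push Not at hy
        refine ⟨i0, fun x hx => ?_⟩
        obtain ⟨l, hl, rfl⟩ := mem_image.1 hx
        exact (hs2 i0 l y (by simpa using hl) hy).le
  have hdc := Finset.sum_card_bipartiteAbove_eq_sum_card_bipartiteBelow (s := D) (t := R)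
    (fun τ σ => τ ⊆ σ)
  have hR : Even (∑ σ ∈ R, (D.bipartiteBelow (fun τ σ => τ ⊆ σ) σ).card) := by
    apply Finset.even_sum
    intro σ hσ
    simp only [R, mem_filter, mem_univ, true_and] at hσ
    refine (congrArg (fun F : Finset (Finset T) => Even F.card) ?_).mpr
      (even_doors c i0 σ hσ.1 (hcon σ hσ.1 hσ.2))
    ext τ
    simp only [Finset.bipartiteBelow, D, mem_filter, mem_univ, true_and]
    constructor
    · rintro ⟨⟨h, -⟩, h'⟩
      exact ⟨h', h⟩
    · rintro ⟨h', h⟩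
      exact ⟨⟨h, hσ.2.mono h'⟩, h'⟩
  rw [← hdc, ← Finset.add_sum_erase _ _ hτ0D] at hR
  have hother : Even (∑ τ ∈ D.erase τ0, (R.bipartiteAbove (fun τ σ => τ ⊆ σ) τ).card) := by
    apply Finset.even_sum
    intro τ hτ
    obtain ⟨hne, hτ⟩ := mem_erase.1 hτ
    simp only [D, mem_filter, mem_univ, true_and] at hτ
    obtain ⟨⟨hcard, him⟩, hdom⟩ := hτ
    have hex : ∃ t ∈ τ, ∀ k, t ≠ s k := by
      by_contra hno
      push Not at hno
      apply hne
      apply Finset.eq_of_subset_of_card_le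
      · intro x hx
        obtain ⟨k, rfl⟩ := hno x hx
        apply hτ0mem
        have : c (s k) ∈ τ.image c := mem_image_of_mem _ hx
        rw [him, hc] at this
        simpa using this
      · omega
    obtain ⟨t, htτ, hts⟩ := hex
    refine (congrArg (fun F : Finset (Finset T) => Even F.card) ?_).mpr
      (even_rooms p hp τ ⟨t, htτ⟩ hcard hdom
        (fun k => ⟨s k, fun l hl => ⟨t, htτ, hs2 l k t hl.symm hts⟩⟩))
    ext σ
    simp only [Finset.bipartiteAbove, R, mem_filter, mem_univ, true_and]
    tauto
  have hone : (R.bipartiteAbove (fun τ σ => τ ⊆ σ) τ0).card = 1 := by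
    obtain ⟨y, hyN, hymax⟩ := exists_max_image (univ.filter fun t : T => ∀ k, t ≠ s k) (p i0)
      ⟨t0, by simpa using ht0⟩
    simp only [mem_filter, mem_univ, true_and] at hyN hymax
    have hyτ0 : y ∉ τ0 := by
      intro h
      obtain ⟨l, -, hl⟩ := mem_image.1 h
      exact hyN l hl.symm
    rw [Finset.card_eq_one]
    refine ⟨insert y τ0, ?_⟩
    ext σ
    simp only [Finset.bipartiteAbove, R, mem_filter, mem_univ, true_and, mem_singleton]
    constructor
    · rintro ⟨⟨h2, h3⟩, h1⟩
      have h4 : (σ \ τ0).card = 1 := by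
        rw [Finset.card_sdiff_of_subset h1]; omega
      obtain ⟨z, hz⟩ := Finset.card_eq_one.1 h4
      have hz' : z ∈ σ \ τ0 := by rw [hz]; simp
      have hσ : σ = insert z τ0 := by
        rw [Finset.insert_eq, ← hz, Finset.sdiff_union_of_subset h1]
      subst hσ
      obtain ⟨i, hi⟩ := h3 y
      have hii : i = i0 := by
        by_contra h
        exact absurd (hi _ (mem_insert_of_mem (hτ0mem i h))) (not_le.2 (hs1 i y (hyN i)))
      subst hii
      have hzy := hi z (mem_insert_self _ _)
      have hzN : ∀ k, z ≠ s k := by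
        rintro k rfl
        by_cases hk : k = i
        · subst hk
          exact absurd hzy (not_le.2 (hs1 k y (hyN k)))
        · exact (mem_sdiff.1 hz').2 (hτ0mem k hk)
      rw [hp i (le_antisymm hzy (hymax z hzN))]
    · rintro rfl
      refine ⟨⟨?_, ?_⟩, subset_insert _ _⟩
      · rw [Finset.card_insert_of_notMem hyτ0, hτ0card]
      · intro z
        by_cases hz : ∃ k, z = s k
        · obtain ⟨k, rfl⟩ := hz
          exact ⟨k, fun x _ => hs1' k x⟩
        · push Not at hz
          refine ⟨i0, fun x hx => ?_⟩
          rcases mem_insert.1 hx with rfl | hx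
          · exact hymax z hz
          · obtain ⟨l, hl, rfl⟩ := mem_image.1 hx
            exact (hs2 i0 l z (by simpa using hl) hz).le
  rw [hone] at hR
  have := (Nat.even_add.1 hR).2 hother
  exact absurd this (by decide)

/-- Grid points of the simplex with denominator `m`. -/
abbrev Grid (I : Type) [Fintype I] (m : ℕ) : Type :=
  {x : I → Fin (m + 1) // ∑ i, (x i : ℕ) = m}

lemma exists_grid_ge (m : ℕ) (C : Finset I) (hC : C.Nonempty) (f : I → ℕ)
    (hf : ∑ i ∈ C, f i ≤ m) : ∃ y : Grid I m, ∀ i ∈ C, f i ≤ (y.1 i : ℕ) := by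
  obtain ⟨k, hk⟩ := hC
  let y : I → ℕ := fun i => (if i ∈ C then f i else 0) + (if i = k then m - ∑ i ∈ C, f i else 0)
  have hy : ∑ i, y i = m := by
    simp only [y, Finset.sum_add_distrib, Finset.sum_ite_mem, Finset.univ_inter,
      Finset.sum_ite_eq', Finset.mem_univ, if_true]
    omega
  have hle : ∀ i, y i < m + 1 := by
    intro i
    have := Finset.single_le_sum (f := y) (fun j _ => Nat.zero_le _) (mem_univ i)
    omega
  refine ⟨⟨fun i => ⟨y i, hle i⟩, hy⟩, fun i hi => ?_⟩
  simp [y, hi]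

lemma grid_scarf [Nonempty I] (m : ℕ) (c : Grid I m → I) :
    ∃ (C : Finset I) (P : I → Grid I m), C.Nonempty ∧ (∀ i ∈ C, c (P i) = i) ∧
      (∀ i ∈ C, ∀ j ∈ C, ∀ k, ((P i).1 k : ℕ) ≤ (P j).1 k + Fintype.card I) ∧
      (∀ i ∈ C, ∀ k, k ∉ C → ((P i).1 k : ℕ) ≤ Fintype.card I) := by
  obtain ⟨y0, -⟩ := exists_grid_ge (I := I) m univ univ_nonempty (fun _ => 0) (by simp)
  let N : ℤ := Fintype.card (Grid I m ⊕ I)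
  let e : Grid I m ⊕ I → ℤ := fun t => ((Fintype.equivFin (Grid I m ⊕ I) t : ℕ) : ℤ)
  have he0 : ∀ t, 0 ≤ e t := fun t => by simp [e]
  have heN : ∀ t, e t < N := fun t => by
    simp only [e, N]
    exact_mod_cast (Fintype.equivFin (Grid I m ⊕ I) t).2
  have heinj : Function.Injective e := by
    intro a b h
    apply (Fintype.equivFin (Grid I m ⊕ I)).injective
    apply Fin.ext
    simpa [e] using h
  let w : I → Grid I m ⊕ I → ℤ := fun i t =>
    Sum.elim (fun x => ((x.1 i : ℕ) : ℤ)) (fun j => if j = i then -1 else (m : ℤ) + 1) t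
  let p : I → Grid I m ⊕ I → ℤ := fun i t => N * w i t + e t
  have hplt : ∀ i a b, w i a < w i b → p i a < p i b := by
    intro i a b h
    have h1 := heN a
    have h2 := he0 b
    have h3 := he0 a
    simp only [p]
    nlinarith
  have hple : ∀ i a b, p i a ≤ p i b → w i a ≤ w i b := by
    intro i a b h
    by_contra hc
    exact absurd h (not_le.2 (hplt i b a (not_le.1 hc)))
  have hpinj : ∀ i, Function.Injective (p i) := by
    intro i a b h
    have h1 : w i a = w i b := le_antisymm (hple i a b h.le) (hple i b a h.ge)
    simp only [p, h1] at h
    exact heinj (by linarith)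
  obtain ⟨σ, -, hdom, him⟩ := scarf p hpinj (Sum.elim c id) Sum.inr
    (by
      intro i t ht
      apply hplt
      rcases t with x | j
      · simp only [w, Sum.elim_inl, Sum.elim_inr, if_true]
        have : (0 : ℤ) ≤ ((x.1 i : ℕ) : ℤ) := by positivity
        linarith
      · have hj : j ≠ i := fun h => ht (by rw [h])
        simp only [w, Sum.elim_inr, if_true, hj, if_false]
        have : (0 : ℤ) ≤ m := by positivity
        linarith)
    (by
      intro i j t hj ht
      apply hplt
      rcases t with x | k
      · simp only [w, Sum.elim_inl, Sum.elim_inr, hj, if_false]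
        have := (x.1 i).2
        exact_mod_cast this
      · exact absurd rfl (ht k))
    (by intro i; rfl) ⟨Sum.inl y0, by simp⟩
  let Q : Finset (Grid I m) := univ.filter fun x => Sum.inl x ∈ σ
  have hQ : ∀ x, x ∈ Q ↔ Sum.inl x ∈ σ := by intro x; simp [Q]
  let C : Finset I := Q.image c
  have hnC : ∀ i, i ∉ C → Sum.inr i ∈ σ := by
    intro i hi
    have : i ∈ σ.image (Sum.elim c id) := by rw [him]; exact mem_univ _
    obtain ⟨t, ht, hti⟩ := mem_image.1 this
    rcases t with x | j
    · exact absurd (mem_image.2 ⟨x, (hQ x).2 ht, hti⟩) hi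
    · have : j = i := hti
      rwa [← this]
  have hd : ∀ y : Grid I m, ∃ i ∈ C, ∀ x ∈ Q, (y.1 i : ℕ) ≤ x.1 i := by
    intro y
    obtain ⟨i, hi⟩ := hdom (Sum.inl y)
    refine ⟨i, ?_, ?_⟩
    · by_contra hiC
      have := hple _ _ _ (hi _ (hnC i hiC))
      simp only [w, Sum.elim_inl, Sum.elim_inr, if_true] at this
      have : (0 : ℤ) ≤ ((y.1 i : ℕ) : ℤ) := by positivity
      linarith
    · intro x hx
      have := hple _ _ _ (hi _ ((hQ x).1 hx))
      simp only [w, Sum.elim_inl] at this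
      exact_mod_cast this
  have hCne : C.Nonempty := by
    obtain ⟨i, hi, -⟩ := hd y0
    exact ⟨i, hi⟩
  have hQne : Q.Nonempty := Finset.image_nonempty.1 hCne
  have hM : ∀ i, ∃ z ∈ Q, ∀ x ∈ Q, (z.1 i : ℕ) ≤ x.1 i := fun i =>
    exists_min_image Q (fun x => (x.1 i : ℕ)) hQne
  choose Z hZQ hZ using hM
  have hsum : m < ∑ i ∈ C, (((Z i).1 i : ℕ) + 1) := by
    by_contra hcon
    obtain ⟨y, hy⟩ := exists_grid_ge m C hCne (fun i => ((Z i).1 i : ℕ) + 1) (not_lt.1 hcon)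
    obtain ⟨i, hi, hle⟩ := hd y
    have h1 := hy i hi
    have h2 := hle _ (hZQ i)
    omega
  have hCcard : C.card ≤ Fintype.card I := Finset.card_le_univ C
  rw [Finset.sum_add_distrib, Finset.sum_const, smul_eq_mul, mul_one] at hsum
  have hxs : ∀ x : Grid I m, ∑ i ∈ C, (x.1 i : ℕ) + ∑ i ∈ univ \ C, (x.1 i : ℕ) = m := by
    intro x
    rw [add_comm, Finset.sum_sdiff (subset_univ C), x.2]
  have hup : ∀ x ∈ Q, ∀ k ∈ C, (x.1 k : ℕ) ≤ (Z k).1 k + Fintype.card I := by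
    intro x hx k hk
    have h1 := hxs x
    rw [← Finset.add_sum_erase _ _ hk] at h1 hsum
    have h2 : ∑ i ∈ C.erase k, ((Z i).1 i : ℕ) ≤ ∑ i ∈ C.erase k, (x.1 i : ℕ) :=
      Finset.sum_le_sum fun i _ => hZ i x hx
    omega
  have hout : ∀ x ∈ Q, ∀ k, k ∉ C → (x.1 k : ℕ) ≤ Fintype.card I := by
    intro x hx k hk
    have h1 := hxs x
    have h2 : ∑ i ∈ C, ((Z i).1 i : ℕ) ≤ ∑ i ∈ C, (x.1 i : ℕ) :=
      Finset.sum_le_sum fun i _ => hZ i x hx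
    have h3 : (x.1 k : ℕ) ≤ ∑ i ∈ univ \ C, (x.1 i : ℕ) :=
      Finset.single_le_sum (f := fun i => (x.1 i : ℕ)) (fun j _ => Nat.zero_le _) (by simp [hk])
    omega
  have hP : ∀ i, ∃ x : Grid I m, i ∈ C → x ∈ Q ∧ c x = i := by
    intro i
    by_cases hi : i ∈ C
    · obtain ⟨x, hx⟩ := mem_image.1 hi
      exact ⟨x, fun _ => hx⟩
    · exact ⟨y0, fun h => absurd h hi⟩
  choose P hP using hP
  refine ⟨C, P, hCne, fun i hi => (hP i hi).2, ?_, fun i hi k hk => hout _ (hP i hi).1 k hk⟩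
  intro i hi j hj k
  by_cases hk : k ∈ C
  · have h1 := hup _ (hP i hi).1 k hk
    have h2 := hZ k _ (hP j hj).1
    omega
  · exact (hout _ (hP i hi).1 k hk).trans (Nat.le_add_left _ _)

/-- Approximate Brouwer. -/
lemma approx_fixed [Nonempty I] (h : stdSimplex ℝ I → stdSimplex ℝ I) (hh : Continuous h)
    (ε : ℝ) (hε : 0 < ε) : ∃ x : stdSimplex ℝ I, ∀ i, x.1 i ≤ (h x).1 i + ε := by
  have huc : UniformContinuous h := CompactSpace.uniformContinuous_of_continuous hh
  obtain ⟨δ, hδ, hhδ⟩ := Metric.uniformContinuous_iff.1 huc (ε / 2) (by positivity)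
  obtain ⟨m, hm⟩ := exists_nat_gt ((Fintype.card I : ℝ) / min δ (ε / 2))
  have hmin : 0 < min δ (ε / 2) := lt_min hδ (by positivity)
  have hm0 : (0 : ℝ) < m := lt_of_le_of_lt (by positivity) hm
  have hDm : (Fintype.card I : ℝ) / m < min δ (ε / 2) := by
    rw [div_lt_iff₀ hmin] at hm
    rw [div_lt_iff₀ hm0]
    linarith
  let v : Grid I m → stdSimplex ℝ I := fun x => ⟨fun i => ((x.1 i : ℕ) : ℝ) / m, by
    refine ⟨fun i => by positivity, ?_⟩
    rw [← Finset.sum_div, ← Nat.cast_sum, x.2, div_self hm0.ne']⟩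
  have hv : ∀ x i, (v x).1 i = ((x.1 i : ℕ) : ℝ) / m := fun x i => rfl
  have hlab : ∀ x : stdSimplex ℝ I, ∃ i, x.1 i ≤ (h x).1 i := by
    intro x
    by_contra hcon
    push Not at hcon
    have := Finset.sum_lt_sum_of_nonempty (univ_nonempty (α := I)) (fun i _ => hcon i)
    rw [x.2.2, (h x).2.2] at this
    exact lt_irrefl _ this
  choose c hc using hlab
  obtain ⟨C, P, ⟨i0, hi0⟩, hPc, hPP, hPo⟩ := grid_scarf m (fun x => c (v x))
  have hle : ∀ i ∈ C, ∀ j ∈ C, ∀ k, (v (P i)).1 k ≤ (v (P j)).1 k + Fintype.card I / m := by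
    intro i hi j hj k
    rw [hv, hv, ← add_div]
    gcongr
    exact_mod_cast hPP i hi j hj k
  refine ⟨v (P i0), fun k => ?_⟩
  by_cases hk : k ∈ C
  · have h1 := hc (v (P k))
    rw [hPc k hk] at h1
    have hdist : dist (v (P k)) (v (P i0)) < δ := by
      refine lt_of_le_of_lt ?_ (hDm.trans_le (min_le_left _ _))
      rw [Subtype.dist_eq, dist_pi_le_iff (by positivity)]
      intro l
      rw [Real.dist_eq, abs_le]
      have a1 := hle k hk i0 hi0 l
      have a2 := hle i0 hi0 k hk l
      constructor <;> linarith
    have h2 := hhδ hdist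
    rw [Subtype.dist_eq] at h2
    have h3 := (dist_le_pi_dist _ _ k).trans_lt h2
    rw [Real.dist_eq] at h3
    have h4 := (abs_lt.1 h3).2
    have h5 := hle i0 hi0 k hk k
    have h6 := hDm.trans_le (min_le_right _ _)
    linarith
  · have h1 : (v (P i0)).1 k ≤ Fintype.card I / m := by
      rw [hv]
      gcongr
      exact_mod_cast hPo i0 hi0 k hk
    have h2 := (h (v (P i0))).2.1 k
    have h6 := hDm.trans_le (min_le_right _ _)
    linarith

/-- Brouwer's fixed point theorem for the simplex. -/
theorem brouwer [Nonempty I] (h : stdSimplex ℝ I → stdSimplex ℝ I) (hh : Continuous h) :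
    ∃ x : stdSimplex ℝ I, h x = x := by
  have hco : ∀ i, Continuous fun x : stdSimplex ℝ I => x.1 i - (h x).1 i := fun i =>
    ((continuous_apply i).comp continuous_subtype_val).sub
      ((continuous_apply i).comp (continuous_subtype_val.comp hh))
  let φ : stdSimplex ℝ I → ℝ := fun x => univ.sup' univ_nonempty fun i => x.1 i - (h x).1 i
  have hφ : Continuous φ := Continuous.finset_sup'_apply univ_nonempty fun i _ => hco i
  obtain ⟨x1, -⟩ := approx_fixed h hh 1 one_pos
  obtain ⟨x, -, hx⟩ := isCompact_univ.exists_isMinOn ⟨x1, Set.mem_univ _⟩ hφ.continuousOn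
  have hle : φ x ≤ 0 := by
    apply le_of_forall_pos_le_add
    intro ε hε
    obtain ⟨y, hy⟩ := approx_fixed h hh ε hε
    refine (hx (Set.mem_univ y)).trans ?_
    apply Finset.sup'_le
    intro i _
    linarith [hy i]
  have hle' : ∀ i, x.1 i ≤ (h x).1 i := by
    intro i
    have := (Finset.le_sup' (fun i => x.1 i - (h x).1 i) (mem_univ i)).trans hle
    linarith
  refine ⟨x, Subtype.ext (funext fun i => ?_)⟩
  have hs : ∑ i, x.1 i = ∑ i, (h x).1 i := by rw [x.2.2, (h x).2.2]
  exact (((Finset.sum_eq_sum_iff_of_le fun i _ => hle' i).1 hs) i (mem_univ i)).symm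

open Fin.CommRing Fin.NatCast in
/-- A KKM type covering lemma. -/
theorem kkm (n : ℕ) (A : Fin (n + 2) → Set (stdSimplex ℝ (Fin (n + 2))))
    (hA : ∀ i, IsOpen (A i)) (hcov : ∀ x, ∃ i, x ∈ A i)
    (hF : ∀ i, ∀ x ∈ A i, x.1 i ≠ 0) : ∃ x, ∀ i, x ∈ A i := by
  by_contra hcon
  push Not at hcon
  let g : Fin (n + 2) → stdSimplex ℝ (Fin (n + 2)) → ℝ := fun i x => Metric.infDist x (A i)ᶜ
  have hgc : ∀ i, Continuous (g i) := fun i => Metric.continuous_infDist_pt _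
  have hg0 : ∀ i x, 0 ≤ g i x := fun i x => Metric.infDist_nonneg
  have hne : ∀ i, ((A i)ᶜ).Nonempty := by
    intro i
    refine ⟨⟨Pi.single (i + 1) 1, single_mem_stdSimplex ℝ (i + 1)⟩, fun h => hF i _ h ?_⟩
    have : i ≠ i + 1 := by simp
    simp [this]
  have hgz : ∀ i x, x ∉ A i → g i x = 0 := fun i x hx => Metric.infDist_zero_of_mem hx
  have hgp : ∀ i x, x ∈ A i → 0 < g i x := fun i x hx =>
    ((hA i).isClosed_compl.notMem_iff_infDist_pos (hne i)).1 (by simpa using hx)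
  have hsum : ∀ x, 0 < ∑ i, g i x := by
    intro x
    obtain ⟨i, hi⟩ := hcov x
    exact Finset.sum_pos' (fun j _ => hg0 j x) ⟨i, mem_univ _, hgp i x hi⟩
  let h : stdSimplex ℝ (Fin (n + 2)) → stdSimplex ℝ (Fin (n + 2)) := fun x =>
    ⟨fun i => g (i + 1) x / ∑ j, g j x, by
      refine ⟨fun i => div_nonneg (hg0 _ _) (hsum x).le, ?_⟩
      have e := Equiv.sum_comp (Equiv.addRight (1 : Fin (n + 2))) (fun j => g j x)
      simp only [Equiv.coe_addRight] at e
      rw [← Finset.sum_div, e, div_self (hsum x).ne']⟩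
  have hh : Continuous h := by
    apply Continuous.subtype_mk
    apply continuous_pi
    intro i
    exact (hgc _).div (continuous_finsetSum _ fun j _ => hgc j) fun x => (hsum x).ne'
  obtain ⟨x, hx⟩ := brouwer h hh
  have hstep : ∀ i, x ∉ A (i + 1) → x.1 i = 0 := by
    intro i hi
    rw [← hx]
    change g (i + 1) x / _ = 0
    rw [hgz _ _ hi, zero_div]
  have hstep' : ∀ i, x ∉ A (i + 1) → x ∉ A i := fun i hi hi' => hF i x hi' (hstep i hi)
  obtain ⟨k, hk⟩ := hcon x
  have hall : ∀ j : ℕ, x ∉ A (k - (j : Fin (n + 2))) := by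
    intro j
    induction j with
    | zero => simpa using hk
    | succ j ih =>
      apply hstep'
      have : k - ((j + 1 : ℕ) : Fin (n + 2)) + 1 = k - (j : Fin (n + 2)) := by
        push_cast; ring
      rwa [this]
  obtain ⟨i, hi⟩ := hcov x
  have := hall (k - i : Fin (n + 2)).val
  rw [Fin.cast_val_eq_self, sub_sub_cancel] at this
  exact this hi

end ScarfAux

/-- For any continuous map `f` from the standard `(n+1)`-simplex to a Hausdorff space
of compact topological dimension at most `n`, the images of the `n + 2` facets have
a common point. -/
theorem images_of_faces_intersect (n : ℕ) (hn : 1 ≤ n)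
    {X : Type} [TopologicalSpace X] [T2Space X]
    (hdim : CompactTopDimLE X n)
    (f : stdSimplex ℝ (Fin (n + 2)) → X) (hf : Continuous f) :
    (⋂ i : Fin (n + 2),
      f '' {x : stdSimplex ℝ (Fin (n + 2)) | (x : Fin (n + 2) → ℝ) i = 0}).Nonempty := by
  by_contra hempty
  rw [Set.not_nonempty_iff_eq_empty] at hempty
  have hclosed : ∀ i : Fin (n + 2), IsClosed
      (f '' {x : stdSimplex ℝ (Fin (n + 2)) | (x : Fin (n + 2) → ℝ) i = 0}) := by
    intro i
    apply IsCompact.isClosed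
    apply IsCompact.image _ hf
    apply IsClosed.isCompact
    exact isClosed_eq ((continuous_apply i).comp continuous_subtype_val) continuous_const
  obtain ⟨κ, V, hVo, hVc, hVU, hVm⟩ := hdim (Set.range f) (isCompact_range hf) (Fin (n + 2))
    (fun i => (f '' {x : stdSimplex ℝ (Fin (n + 2)) | (x : Fin (n + 2) → ℝ) i = 0})ᶜ)
    (fun i => (hclosed i).isOpen_compl)
    (by rw [← Set.compl_iInter, hempty]; simp)
  choose φ hφ using hVU
  obtain ⟨x, hx⟩ := ScarfAux.kkm n (fun i => ⋃ j, ⋃ (_ : φ j = i), f ⁻¹' (V j))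
    (fun i => isOpen_iUnion fun j => isOpen_iUnion fun _ => (hVo j).preimage hf)
    (by
      intro x
      obtain ⟨j, hj⟩ := Set.mem_iUnion.1 (hVc (Set.mem_range_self x))
      exact ⟨φ j, by simp only [Set.mem_iUnion]; exact ⟨j, rfl, hj⟩⟩)
    (by
      intro i x hx hxi
      simp only [Set.mem_iUnion] at hx
      obtain ⟨j, rfl, hj⟩ := hx
      exact hφ j hj ⟨x, hxi, rfl⟩)
  simp only [Set.mem_iUnion] at hx
  choose J hJφ hJ using hx
  obtain ⟨s, hs, hsm⟩ := hVm (f x) (Set.mem_range_self x)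
  have hJinj : Function.Injective J := fun a b h => by rw [← hJφ a, ← hJφ b, h]
  have h1 := Finset.card_le_card_of_injOn (s := Finset.univ) (t := s) J
    (fun i _ => hsm _ (hJ i)) hJinj.injOn
  simp at h1
  omega
end

section
/- Let n ≥ 1 and let X be a contractible Hausdorff topological space of compact topological dimension at most n (every open cover of every compact subset of X admits an open refinement in which every point belongs to at most n + 1 members). Let A₁, …, A_{n+2} be exactly n + 2 subsets of X, each contractible as a topological subspace, such that the intersection of every subcollection is either contractible (as a subspace) or empty, and such that for every subset I ⊆ {1, …, n+2} with |I| = n + 1 the intersection ⋂_{i∈I} A_i is nonempty. Then ⋂_{i=1}^{n+2} A_i is nonempty. -/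
open Classical in
/-- coboundary on functions of lists, mod 2 -/
noncomputable def cobd {E : Type*} (φ : List E → ZMod 2) (l : List E) : ZMod 2 :=
  ∑ i ∈ Finset.range l.length, φ (l.eraseIdx i)

theorem cobd_nil {E : Type*} (φ : List E → ZMod 2) : cobd φ [] = 0 := by simp [cobd]

theorem cobd_cons {E : Type*} (φ : List E → ZMod 2) (a : E) (l : List E) :
    cobd φ (a :: l) = φ l + cobd (fun t => φ (a :: t)) l := by
  simp [cobd, Finset.sum_range_succ', add_comm]

theorem cobd_add {E : Type*} (φ ψ : List E → ZMod 2) (l : List E) :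
    cobd (fun t => φ t + ψ t) l = cobd φ l + cobd ψ l := by
  simp [cobd, Finset.sum_add_distrib]

theorem cobd_cobd {E : Type*} (l : List E) : ∀ (φ : List E → ZMod 2),
    cobd (cobd φ) l = 0 := by
  induction l with
  | nil => intro φ; exact cobd_nil _
  | cons a l ih =>
    intro φ
    rw [cobd_cons]
    simp only [cobd_cons]
    rw [cobd_add, ih, add_zero]
    exact CharTwo.add_self_eq_zero _

theorem cobd_congr {E : Type*} (φ ψ : List E → ZMod 2) (l : List E)
    (h : ∀ t, t.Sublist l → t.length + 1 = l.length → φ t = ψ t) : cobd φ l = cobd ψ l := by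
  unfold cobd
  refine Finset.sum_congr rfl fun i hi => ?_
  have hi' := Finset.mem_range.1 hi
  refine h _ (List.eraseIdx_sublist _ _) ?_
  rw [List.length_eraseIdx_of_lt hi']; omega

theorem cobd_ne {E : Type*} (φ : List E → ZMod 2) (l : List E) (h : cobd φ l ≠ 0) :
    ∃ t, t.Sublist l ∧ t.length + 1 = l.length ∧ φ t ≠ 0 := by
  by_contra! H
  apply h
  rw [cobd_congr φ (fun _ => 0) l H]
  simp [cobd]

open Classical in
theorem cobd_count {E ι : Type*} (lab : E → ι) (M : Multiset ι) (c : ι) (l : List E) :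
    ∀ (P : Multiset ι), P + (l.map lab : List ι) = c ::ₘ M →
    cobd (fun t => if P + ((t.map lab : List ι) : Multiset ι) = M then (1 : ZMod 2) else 0) l
      = ((l.map lab).count c : ZMod 2) := by
  induction l with
  | nil => intro P _; simp [cobd_nil]
  | cons a l ih =>
    intro P hP
    rw [cobd_cons]
    have h2 : (P + {lab a}) + (l.map lab : List ι) = c ::ₘ M := by
      rw [← hP, List.map_cons, ← Multiset.cons_coe, add_assoc, Multiset.singleton_add]
    have := ih (P + {lab a}) h2
    have h3 : ∀ t : List E, P + (((a :: t).map lab : List ι) : Multiset ι)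
        = (P + {lab a}) + (t.map lab : List ι) := by
      intro t
      rw [List.map_cons, ← Multiset.cons_coe, add_assoc, Multiset.singleton_add]
    simp only [h3, this]
    rw [List.map_cons, List.count_cons]
    have h4 : lab a ::ₘ (P + (l.map lab : List ι)) = c ::ₘ M := by
      rw [← h2, add_assoc, add_comm {lab a}, ← add_assoc, add_comm _ {lab a},
        Multiset.singleton_add]
    have h5 : (P + ((l.map lab : List ι) : Multiset ι) = M) ↔ lab a = c := by
      constructor
      · intro h
        rw [h] at h4
        exact (Multiset.cons_inj_left M).1 h4
      · intro h
        rw [h] at h4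
        exact (Multiset.cons_inj_right c).1 h4
    by_cases h : lab a = c
    · simp [h5, h, add_comm]
    · simp [h5, h]

open Classical in
/-- indicator of being labelled exactly by `M` -/
noncomputable def full {E ι : Type*} (lab : E → ι) (M : Multiset ι) (t : List E) : ZMod 2 :=
  if ((t.map lab : List ι) : Multiset ι) = M then 1 else 0

theorem cobd_full {E ι : Type*} (lab : E → ι) (a : ι) (L : List ι) (hL : (a :: L).Nodup)
    (l : List E) (hl : ∀ x ∈ l, lab x ∈ a :: L) :
    cobd (full lab L) l = full lab ((a :: L : List ι) : Multiset ι) l := by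
  classical
  by_cases h : ∃ c, ((l.map lab : List ι) : Multiset ι) = c ::ₘ (L : Multiset ι)
  · obtain ⟨c, hc⟩ := h
    have h1 := cobd_count lab (L : Multiset ι) c l 0 (by simpa using hc)
    have h2 : cobd (full lab L) l = ((l.map lab).count c : ZMod 2) := by
      rw [← h1]; unfold full; simp
    have h3 : (l.map lab).count c = L.count c + 1 := by
      rw [← Multiset.coe_count, hc]; simp
    have h4 : c ∈ a :: L := by
      have : c ∈ ((l.map lab : List ι) : Multiset ι) := by rw [hc]; simp
      simp only [Multiset.mem_coe, List.mem_map] at this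
      obtain ⟨x, hx, rfl⟩ := this
      exact hl x hx
    rw [h2, h3]
    unfold full
    simp only [hc, ← Multiset.cons_coe, Multiset.cons_inj_left]
    rw [List.nodup_cons] at hL
    rcases List.mem_cons.1 h4 with h | h
    · subst h
      simp [List.count_eq_zero_of_not_mem hL.1]
    · have : c ≠ a := by rintro rfl; exact hL.1 h
      simp only [this, if_false]
      rw [List.count_eq_one_of_mem hL.2 h]
      decide
  · have h1 : full lab ((a :: L : List ι) : Multiset ι) l = 0 := by
      unfold full
      rw [if_neg]
      intro h'
      exact h ⟨a, by rw [h']; simp⟩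
    rw [h1]
    by_contra h2
    unfold cobd at h2
    obtain ⟨i, hi, hne⟩ := Finset.exists_ne_zero_of_sum_ne_zero h2
    have hi := Finset.mem_range.1 hi
    unfold full at hne
    simp only [ne_eq, ite_eq_right_iff, Classical.not_imp] at hne
    apply h
    refine ⟨lab l[i], ?_⟩
    rw [← hne.1]
    have := (List.getElem_cons_eraseIdx_perm hi).map lab
    rw [Multiset.cons_coe]
    exact (Multiset.coe_eq_coe.2 this.symm)

section sub
variable {E : Type*} [NormedAddCommGroup E] [NormedSpace ℝ E]

/-- barycenter -/
noncomputable def bary (l : List E) : E := (1 / (l.length : ℝ)) • l.sum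

/-- pull back of functions under barycentric subdivision -/
noncomputable def sdv : ℕ → (List E → ZMod 2) → List E → ZMod 2
  | 0, φ, l => φ l
  | k + 1, φ, l => cobd (sdv k (fun t => φ (bary l :: t))) l

theorem sdv_add (k : ℕ) : ∀ (φ ψ : List E → ZMod 2) (l : List E),
    sdv k (fun t => φ t + ψ t) l = sdv k φ l + sdv k ψ l := by
  induction k with
  | zero => intros; rfl
  | succ k ih =>
    intro φ ψ l
    simp only [sdv]
    rw [← cobd_add]
    congr 1
    funext t
    rw [ih]

theorem sdv_cobd (k : ℕ) : ∀ (φ : List E → ZMod 2) (l : List E), l.length = k + 1 →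
    sdv (k + 1) (cobd φ) l = cobd (sdv k φ) l := by
  induction k with
  | zero =>
    intro φ l hl
    simp only [sdv]
    apply cobd_congr
    intro t _ ht
    have : t = [] := List.eq_nil_of_length_eq_zero (by omega)
    subst this
    simp [cobd_cons, cobd_nil]
  | succ k ih =>
    intro φ l hl
    rw [sdv]
    simp only [cobd_cons]
    have : ∀ t : List E, t.length = k + 1 →
      sdv (k + 1) (fun t => φ t + cobd (fun s => φ (bary l :: s)) t) t =
        sdv (k + 1) φ t + cobd (sdv k (fun s => φ (bary l :: s))) t := by
      intro t ht
      rw [sdv_add, ih _ _ ht]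
    rw [cobd_congr _ _ l (fun t _ ht => this t (by omega)), cobd_add, cobd_cobd, add_zero]

theorem bary_mem {s : Set E} (hs : Convex ℝ s) (l : List E) (hl : l ≠ [])
    (h : ∀ x ∈ l, x ∈ s) : bary l ∈ s := by
  unfold bary
  have h1 : l.sum = ∑ i : Fin l.length, l[i] := by
    simp [Fin.sum_univ_getElem]
  have hpos : (0 : ℝ) < l.length := by
    exact_mod_cast List.length_pos_iff.2 hl
  rw [h1, Finset.smul_sum]
  apply hs.sum_mem
  · intro i _; positivity
  · simp [hpos.ne']
  · intro i _; exact h _ (by simp)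

theorem norm_sum_sub_le (v : E) (D : ℝ) (l : List E) (h : ∀ x ∈ l, dist x v ≤ D) :
    ‖l.sum - (l.length : ℝ) • v‖ ≤ l.length * D := by
  induction l with
  | nil => simp
  | cons a l ih =>
    have h1 := ih (fun x hx => h x (List.mem_cons_of_mem _ hx))
    have h2 := h a (by simp)
    rw [dist_eq_norm] at h2
    have : (a :: l).sum - ((a :: l).length : ℝ) • v = (a - v) + (l.sum - (l.length : ℝ) • v) := by
      simp [add_smul]; abel
    rw [this]
    refine (norm_add_le _ _).trans ?_
    push_cast [List.length_cons]
    linarith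

theorem dist_bary_le (l : List E) (v : E) (hv : v ∈ l) (D : ℝ) (h : ∀ x ∈ l, dist x v ≤ D) :
    dist (bary l) v ≤ (1 - 1 / (l.length : ℝ)) * D := by
  classical
  have hp := List.perm_cons_erase hv
  have h1 : l.sum = v + (l.erase v).sum := by rw [hp.sum_eq]; simp
  have h2 : l.length = (l.erase v).length + 1 := by rw [hp.length_eq]; simp
  have h3 := norm_sum_sub_le v D (l.erase v) (fun x hx => h x (List.mem_of_mem_erase hx))
  have hpos : (0 : ℝ) < ((l.erase v).length : ℝ) + 1 := by positivity
  rw [dist_eq_norm]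
  have h4 : bary l - v = (1 / (((l.erase v).length : ℝ) + 1)) •
      ((l.erase v).sum - ((l.erase v).length : ℝ) • v) := by
    unfold bary
    rw [h1, h2]
    push_cast
    have : v = (1 / (((l.erase v).length : ℝ) + 1)) • ((((l.erase v).length : ℝ) + 1) • v) := by
      rw [smul_smul]; field_simp; simp
    nth_rewrite 4 [this]
    rw [← smul_sub]
    congr 1
    rw [add_smul, one_smul]; abel
  rw [h4, norm_smul, h2]
  push_cast
  rw [Real.norm_of_nonneg (by positivity)]
  calc _ ≤ (1 / (((l.erase v).length : ℝ) + 1)) * ((l.erase v).length * D) := by gcongr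
    _ = _ := by field_simp; ring

/-- support of the subdivision -/
theorem sdv_ne (k : ℕ) : ∀ (φ : List E → ZMod 2) (l : List E), l.length = k → sdv k φ l ≠ 0 →
    ∃ t, t.length = k ∧ φ t ≠ 0 ∧ (∀ x ∈ t, x ∈ convexHull ℝ {y | y ∈ l}) ∧
      ∀ D : ℝ, (∀ x ∈ l, ∀ y ∈ l, dist x y ≤ D) →
        ∀ x ∈ t, ∀ y ∈ t, dist x y ≤ (1 - 1 / (k : ℝ)) * D := by
  induction k with
  | zero =>
    intro φ l hl h
    have : l = [] := List.eq_nil_of_length_eq_zero hl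
    subst this
    exact ⟨[], rfl, h, by simp, by simp⟩
  | succ k ih =>
    intro φ l hl h
    rw [sdv] at h
    obtain ⟨l₁, hs, hlen, h1⟩ := cobd_ne _ _ h
    obtain ⟨t, ht, hne, hmem, hdist⟩ := ih _ l₁ (by omega) h1
    have hl0 : l ≠ [] := by rintro rfl; simp at hl
    have hsub : ({y | y ∈ l₁} : Set E) ⊆ {y | y ∈ l} := fun y hy => hs.subset hy
    have hmem' : ∀ x ∈ t, x ∈ convexHull ℝ {y | y ∈ l} := fun x hx =>
      convexHull_mono hsub (hmem x hx)
    refine ⟨bary l :: t, by simp [ht], hne, ?_, ?_⟩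
    · intro x hx
      rcases List.mem_cons.1 hx with rfl | hx
      · exact bary_mem (convex_convexHull ℝ _) l hl0 (fun y hy => subset_convexHull ℝ _ hy)
      · exact hmem' x hx
    · intro D hD
      have hD0 : 0 ≤ D := by
        obtain ⟨y, hy⟩ := List.exists_mem_of_ne_nil l hl0
        simpa using hD y hy y hy
      have hb : ∀ x ∈ t, dist x (bary l) ≤ (1 - 1 / ((k + 1 : ℕ) : ℝ)) * D := by
        intro x hx
        have h2 : convexHull ℝ {y | y ∈ l} ⊆
            Metric.closedBall (bary l) ((1 - 1 / ((k + 1 : ℕ) : ℝ)) * D) := by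
          apply convexHull_min _ (convex_closedBall _ _)
          intro v hv
          rw [Metric.mem_closedBall, dist_comm, ← hl]
          exact dist_bary_le l v hv D (fun x hx => hD x hx v hv)
        exact h2 (hmem' x hx)
      have hk0 : (0 : ℝ) ≤ (1 - 1 / ((k + 1 : ℕ) : ℝ)) * D := by
        apply mul_nonneg _ hD0
        rw [sub_nonneg, div_le_one (by positivity)]
        push_cast; linarith [(Nat.cast_nonneg k : (0:ℝ) ≤ k)]
      intro x hx y hy
      rcases List.mem_cons.1 hx with rfl | hx <;> rcases List.mem_cons.1 hy with rfl | hy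
      · simpa using hk0
      · rw [dist_comm]; exact hb y hy
      · exact hb x hx
      · have h3 := hdist D (fun x hx y hy => hD x (hs.subset hx) y (hs.subset hy)) x hx y hy
        refine h3.trans (mul_le_mul_of_nonneg_right ?_ hD0)
        have hk : (0 : ℝ) < k := by
          have := List.length_pos_of_mem hx
          rw [ht] at this
          exact_mod_cast this
        have : 1 / ((k + 1 : ℕ) : ℝ) ≤ 1 / (k : ℝ) := by
          apply one_div_le_one_div_of_le hk
          push_cast; linarith
        linarith

theorem sdv_iter_ne (k m : ℕ) : ∀ (φ : List E → ZMod 2) (l : List E), l.length = k →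
    (sdv k)^[m] φ l ≠ 0 →
    ∃ t, t.length = k ∧ φ t ≠ 0 ∧ (∀ x ∈ t, x ∈ convexHull ℝ {y | y ∈ l}) ∧
      ∀ D : ℝ, (∀ x ∈ l, ∀ y ∈ l, dist x y ≤ D) →
        ∀ x ∈ t, ∀ y ∈ t, dist x y ≤ (1 - 1 / (k : ℝ)) ^ m * D := by
  induction m with
  | zero =>
    intro φ l hl h
    exact ⟨l, hl, h, fun x hx => subset_convexHull ℝ _ hx, by simp⟩
  | succ m ih =>
    intro φ l hl h
    rw [Function.iterate_succ_apply] at h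
    obtain ⟨t, ht, hne, hmem, hdist⟩ := ih _ l hl h
    obtain ⟨s, hs, hne', hmem', hdist'⟩ := sdv_ne k φ t ht hne
    refine ⟨s, hs, hne', ?_, ?_⟩
    · intro x hx
      exact convexHull_min (fun y hy => hmem y hy) (convex_convexHull ℝ _) (hmem' x hx)
    · intro D hD x hx y hy
      have := hdist' _ (hdist D hD) x hx y hy
      rw [pow_succ']; rw [mul_assoc]; exact this

theorem sdv_iter_add (k m : ℕ) : ∀ (φ ψ : List E → ZMod 2) (l : List E),
    (sdv k)^[m] (fun t => φ t + ψ t) l = (sdv k)^[m] φ l + (sdv k)^[m] ψ l := by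
  induction m with
  | zero => intros; rfl
  | succ m ih =>
    intro φ ψ l
    simp only [Function.iterate_succ_apply]
    rw [← ih]
    have : sdv k (fun t => φ t + ψ t) = fun t => sdv k φ t + sdv k ψ t := by
      funext t
      rw [sdv_add]
    rw [this]

theorem sdv_iter_congr (k m : ℕ) (φ ψ : List E → ZMod 2) (l : List E) (hl : l.length = k)
    (h : ∀ t : List E, t.length = k → (∀ x ∈ t, x ∈ convexHull ℝ {y | y ∈ l}) → φ t = ψ t) :
    (sdv k)^[m] φ l = (sdv k)^[m] ψ l := by
  by_contra hne
  have h1 : (sdv k)^[m] (fun t => φ t + ψ t) l ≠ 0 := by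
    rw [sdv_iter_add]
    intro h0
    exact hne (CharTwo.add_eq_zero.1 h0)
  obtain ⟨t, ht, hne', hmem, -⟩ := sdv_iter_ne k m _ l hl h1
  apply hne'
  rw [h t ht hmem]
  exact CharTwo.add_self_eq_zero _

theorem sdv_iter_cobd (k m : ℕ) : ∀ (φ : List E → ZMod 2) (l : List E), l.length = k + 1 →
    (sdv (k + 1))^[m] (cobd φ) l = cobd ((sdv k)^[m] φ) l := by
  induction m with
  | zero => intros; rfl
  | succ m ih =>
    intro φ l hl
    simp only [Function.iterate_succ_apply]
    rw [← ih _ _ hl]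
    apply sdv_iter_congr _ _ _ _ _ hl
    intro t ht _
    exact sdv_cobd k φ t ht

theorem sperner {ι : Type*} (v : ι → E) (lab : E → ι)
    (hlab : ∀ (J : Set ι) (x : E), x ∈ convexHull ℝ (v '' J) → lab x ∈ J) (m : ℕ) (L : List ι) :
    L.Nodup → (sdv L.length)^[m] (full lab L) (L.map v) = 1 := by
  induction L with
  | nil =>
    intro _
    have : ∀ m, (sdv 0)^[m] (full lab ([] : List ι)) ([] : List E) = 1 := by
      intro m
      have h0 : sdv 0 = (id : (List E → ZMod 2) → _) := by funext φ l; rfl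
      rw [h0, Function.iterate_id]
      simp [full]
    exact this m
  | cons a L ih =>
    intro hL
    have hset : ∀ M : List ι, {y | y ∈ M.map v} = v '' {i | i ∈ M} := by
      intro M; ext y; simp
    rw [List.length_cons, sdv_iter_congr _ _ _ (cobd (full lab L)) _ (by simp), sdv_iter_cobd _ _ _ _ (by simp)]
    · rw [List.map_cons, cobd_cons, ih (List.nodup_cons.1 hL).2]
      convert add_zero _
      by_contra hne
      obtain ⟨t, hs, hlen, h1⟩ := cobd_ne _ _ hne
      obtain ⟨M, hM, rfl⟩ := List.sublist_map_iff.1 hs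
      rw [List.length_map, List.length_map] at hlen
      rw [← List.map_cons] at h1
      obtain ⟨s, hs, hf, hmem, -⟩ := sdv_iter_ne _ _ _ _ (by simp [hlen]) h1
      rw [hset] at hmem
      unfold full at hf
      simp only [ne_eq, ite_eq_right_iff, Classical.not_imp] at hf
      have hperm := Multiset.coe_eq_coe.1 hf.1
      have hsub : ∀ j ∈ L, j ∈ M := by
        intro j hj
        have := hperm.mem_iff.2 hj
        obtain ⟨x, hx, rfl⟩ := List.mem_map.1 this
        have := hlab _ x (hmem x hx)
        simp only [Set.mem_ofPred_eq, List.mem_cons] at this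
        rcases this with h | h
        · rw [h] at hj; exact absurd hj (List.nodup_cons.1 hL).1
        · exact h
      have := ((List.nodup_cons.1 hL).2.subperm hsub).length_le
      omega
    · intro t ht hmem
      rw [cobd_full lab a L hL]
      intro x hx
      have := hmem x hx
      rw [hset] at this
      exact hlab _ x this

end sub

theorem kkm_closed {ι : Type*} [Fintype ι] [Nonempty ι] (C : ι → Set (ι → ℝ))
    (hC : ∀ i, IsClosed (C i)) (hcov : ∀ x ∈ stdSimplex ℝ ι, ∃ i, x ∈ C i)
    (hne : ∀ x ∈ stdSimplex ℝ ι, ∀ i, x ∈ C i → x i ≠ 0) :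
    ∃ x ∈ stdSimplex ℝ ι, ∀ i, x ∈ C i := by
  classical
  by_contra! hcon
  obtain ⟨δ, hδ, hball⟩ := lebesgue_number_lemma_of_metric (c := fun i => (C i)ᶜ)
    (isCompact_stdSimplex ℝ ι) (fun i => (hC i).isOpen_compl)
    (fun x hx => by
      obtain ⟨i, hi⟩ := hcon x hx
      exact Set.mem_iUnion.2 ⟨i, hi⟩)
  choose! lab hlab using hcov
  let v : ι → ι → ℝ := fun i => Pi.single i 1
  have hv : ∀ i, v i ∈ stdSimplex ℝ ι := fun i => single_mem_stdSimplex ℝ i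
  have hhull : ∀ (J : Set ι) (x : ι → ℝ), x ∈ convexHull ℝ (v '' J) →
      x ∈ stdSimplex ℝ ι ∧ ∀ i ∉ J, x i = 0 := by
    intro J x hx
    constructor
    · refine convexHull_min ?_ (convex_stdSimplex ℝ ι) hx
      rintro _ ⟨i, -, rfl⟩
      exact hv i
    · intro i hi
      have hc : Convex ℝ {x : ι → ℝ | x i = 0} := by
        intro x hx y hy a b _ _ _
        simp only [Set.mem_ofPred_eq] at *
        simp [hx, hy]
      refine convexHull_min ?_ hc hx
      rintro _ ⟨j, hj, rfl⟩
      have : i ≠ j := by rintro rfl; exact hi hj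
      simp [v, this]
  have hJ : ∀ (J : Set ι) (x : ι → ℝ), x ∈ convexHull ℝ (v '' J) → lab x ∈ J := by
    intro J x hx
    obtain ⟨h1, h2⟩ := hhull J x hx
    by_contra h3
    exact hne x h1 _ (hlab x h1) (h2 _ h3)
  let L : List ι := Finset.univ.toList
  have hL : L.Nodup := Finset.nodup_toList _
  have hlen : 0 < L.length := by simp [L, Fintype.card_pos]
  have hr : 0 ≤ 1 - 1 / (L.length : ℝ) ∧ 1 - 1 / (L.length : ℝ) < 1 := by
    have h1 : (1 : ℝ) ≤ L.length := by exact_mod_cast hlen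
    constructor
    · rw [sub_nonneg, div_le_one (by linarith)]; exact h1
    · have : 0 < 1 / (L.length : ℝ) := by positivity
      linarith
  obtain ⟨m, hm⟩ := exists_pow_lt_of_lt_one hδ hr.2
  have hsp := sperner v lab hJ m L hL
  obtain ⟨t, htl, hf, hmem, hdist⟩ := sdv_iter_ne L.length m (full lab L) (L.map v) (by simp)
    (by rw [hsp]; exact one_ne_zero)
  have hset : {y | y ∈ L.map v} = v '' {i | i ∈ L} := by ext y; simp
  rw [hset] at hmem
  have hd := hdist 1 (by
    intro x hx y hy
    obtain ⟨i, -, rfl⟩ := List.mem_map.1 hx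
    obtain ⟨j, -, rfl⟩ := List.mem_map.1 hy
    exact (Metric.dist_le_diam_of_mem (bounded_stdSimplex ι) (hv i) (hv j)).trans
      (diam_stdSimplex_le))
  unfold full at hf
  simp only [ne_eq, ite_eq_right_iff, Classical.not_imp] at hf
  have hperm := Multiset.coe_eq_coe.1 hf.1
  obtain ⟨x, hx⟩ : ∃ x, x ∈ t := by
    apply List.exists_mem_of_ne_nil
    rintro rfl
    simp at htl; omega
  obtain ⟨i, hi⟩ := hball x (hhull _ x (hmem x hx)).1
  have : i ∈ t.map lab := hperm.mem_iff.2 (by simp [L])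
  obtain ⟨y, hy, hyi⟩ := List.mem_map.1 this
  have h1 : y ∈ Metric.ball x δ := by
    rw [Metric.mem_ball]
    have := hd y hy x hx
    linarith
  apply hi h1
  rw [← hyi]
  exact hlab y (hhull _ y (hmem y hy)).1

theorem kkm_open {ι : Type*} [Fintype ι] [Nonempty ι] (W : ι → Set (stdSimplex ℝ ι))
    (hW : ∀ i, IsOpen (W i)) (hcov : ∀ x, ∃ i, x ∈ W i)
    (hne : ∀ x, ∀ i, x ∈ W i → x.1 i ≠ 0) : ∃ x, ∀ i, x ∈ W i := by
  obtain ⟨C, hCU, hCc, hCW⟩ := exists_iUnion_eq_closed_subset hW (fun x => Set.toFinite _)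
    (Set.eq_univ_of_forall fun x => Set.mem_iUnion.2 (hcov x))
  obtain ⟨x, hx, hxC⟩ := kkm_closed (fun i => Subtype.val '' C i)
    (fun i => ((hCc i).isCompact.image continuous_subtype_val).isClosed)
    (fun x hx => by
      have : (⟨x, hx⟩ : stdSimplex ℝ ι) ∈ ⋃ i, C i := by rw [hCU]; trivial
      obtain ⟨i, hi⟩ := Set.mem_iUnion.1 this
      exact ⟨i, _, hi, rfl⟩)
    (by
      rintro x hx i ⟨y, hy, rfl⟩
      exact hne y i (hCW i hy))
  refine ⟨⟨x, hx⟩, fun i => ?_⟩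
  obtain ⟨y, hy, hyx⟩ := hxC i
  have : y = ⟨x, hx⟩ := Subtype.ext hyx
  rw [← this]
  exact hCW i hy

/-- closed face -/
def face {ι : Type*} [Fintype ι] (J : Finset ι) : Set (ι → ℝ) :=
  {x | x ∈ stdSimplex ℝ ι ∧ ∀ i, i ∉ J → x i = 0}

/-- boundary of a face -/
def bdface {ι : Type*} [Fintype ι] (J : Finset ι) : Set (ι → ℝ) :=
  {x | x ∈ face J ∧ ∃ i ∈ J, x i = 0}

theorem face_closed {ι : Type*} [Fintype ι] (J : Finset ι) : IsClosed (face J) := by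
  have : face J = stdSimplex ℝ ι ∩ ⋂ i, ⋂ (_ : i ∉ J), {x | x i = 0} := by
    ext x; simp [face]
  rw [this]
  refine (isClosed_stdSimplex ℝ ι).inter (isClosed_iInter fun i => isClosed_iInter fun _ => ?_)
  exact isClosed_eq (continuous_apply i) continuous_const

theorem bdface_eq {ι : Type*} [Fintype ι] [DecidableEq ι] (J : Finset ι) :
    bdface J = ⋃ i : J, face (J.erase i.1) := by
  ext x
  simp only [bdface, face, Set.mem_iUnion, Set.mem_ofPred_eq, Finset.mem_erase]
  constructor
  · rintro ⟨⟨h1, h2⟩, i, hi, h3⟩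
    refine ⟨⟨i, hi⟩, h1, fun j hj => ?_⟩
    by_cases h : j = i
    · rw [h, h3]
    · exact h2 j (fun h' => hj ⟨h, h'⟩)
  · rintro ⟨⟨i, hi⟩, h1, h2⟩
    exact ⟨⟨h1, fun j hj => h2 j (fun h => hj h.2)⟩, i, hi, h2 i (fun h => h.1 rfl)⟩

theorem bdface_closed {ι : Type*} [Fintype ι] (J : Finset ι) : IsClosed (bdface J) := by
  classical
  rw [bdface_eq]
  exact isClosed_iUnion_of_finite fun i => face_closed _

theorem face_compact {ι : Type*} [Fintype ι] (J : Finset ι) : IsCompact (face J) :=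
  (isCompact_stdSimplex ℝ ι).of_isClosed_subset (face_closed J) fun _ h => h.1

theorem extend_face {ι : Type*} [Fintype ι] {X : Type*} [TopologicalSpace X] (J : Finset ι)
    (hJ : J.Nonempty) (Y : Set X) [ContractibleSpace Y] (f : (ι → ℝ) → X)
    (hf : ContinuousOn f (bdface J)) (hfY : Set.MapsTo f (bdface J) Y) :
    ∃ g : (ι → ℝ) → X, ContinuousOn g (face J) ∧ Set.MapsTo g (face J) Y ∧
      Set.EqOn g f (bdface J) := by
  classical
  obtain ⟨p, ⟨H⟩⟩ := id_nullhomotopic Y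
  rcases (bdface J).eq_empty_or_nonempty with he | ⟨y₀, hy₀⟩
  · exact ⟨fun _ => p, continuousOn_const, fun _ _ => p.2, by rw [he]; exact Set.eqOn_empty _ _⟩
  have hc : (0 : ℝ) < J.card := by exact_mod_cast hJ.card_pos
  let b : ι → ℝ := fun i => if i ∈ J then 1 / (J.card : ℝ) else 0
  have hbS : b ∈ stdSimplex ℝ ι := by
    constructor
    · intro i; simp only [b]; split_ifs <;> positivity
    · simp [b, Finset.sum_ite_mem, hc.ne']
  have hqm : ∀ (t : unitInterval) (y : bdface J),
      (t : ℝ) • b + (1 - (t : ℝ)) • y.1 ∈ face J := by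
    intro t y
    refine ⟨convex_stdSimplex ℝ ι hbS y.2.1.1 t.2.1 (by linarith [t.2.2]) (by ring), ?_⟩
    intro i hi
    simp [b, hi, y.2.1.2 i hi]
  let q : unitInterval × bdface J → face J := fun z => ⟨_, hqm z.1 z.2⟩
  have hqc : Continuous q := by
    apply Continuous.subtype_mk
    fun_prop
  have : CompactSpace (bdface J) := isCompact_iff_compactSpace.1
    ((face_compact J).of_isClosed_subset (bdface_closed J) fun _ h => h.1)
  have hqs : Function.Surjective q := by
    rintro ⟨x, hx⟩
    obtain ⟨j, hj, hmin⟩ := J.exists_min_image x hJ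
    have hsum : ∑ i ∈ J, x i = 1 := by
      rw [← hx.1.2]
      exact Finset.sum_subset (Finset.subset_univ _) fun i _ hi => hx.2 i hi
    have ht1 : J.card * x j ≤ 1 := by
      rw [← hsum, ← nsmul_eq_mul]
      exact Finset.card_nsmul_le_sum _ _ _ hmin
    have ht0 : 0 ≤ J.card * x j := mul_nonneg hc.le (hx.1.1 j)
    rcases ht1.eq_or_lt with h1 | h1
    · refine ⟨(1, ⟨y₀, hy₀⟩), Subtype.ext ?_⟩
      have hall : ∀ i ∈ J, x j = x i := by
        have : ∑ i ∈ J, x j = ∑ i ∈ J, x i := by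
          rw [hsum, Finset.sum_const, nsmul_eq_mul, h1]
        exact (Finset.sum_eq_sum_iff_of_le hmin).1 this
      funext i
      simp only [q, b]
      by_cases hi : i ∈ J
      · simp [hi, ← hall i hi]
        field_simp; linarith
      · simp [hi, hx.2 i hi]
    · have h2 : 0 < 1 - J.card * x j := by linarith
      have hy : (1 - J.card * x j)⁻¹ • (x - (J.card * x j) • b) ∈ bdface J := by
        refine ⟨⟨⟨?_, ?_⟩, ?_⟩, j, hj, ?_⟩
        · intro i
          simp only [Pi.smul_apply, Pi.sub_apply, smul_eq_mul]
          apply mul_nonneg (by positivity)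
          by_cases hi : i ∈ J
          · have := hmin i hi
            simp only [b, hi, if_true]
            field_simp; linarith
          · simp [b, hi, hx.2 i hi]
        · simp only [Pi.smul_apply, Pi.sub_apply, smul_eq_mul]
          rw [← Finset.mul_sum, Finset.sum_sub_distrib, ← Finset.mul_sum, hx.1.2, hbS.2]
          field_simp
        · intro i hi
          simp [b, hi, hx.2 i hi]
        · simp only [Pi.smul_apply, Pi.sub_apply, smul_eq_mul, b, hj, if_true]
          field_simp; simp
      refine ⟨(⟨J.card * x j, ht0, ht1⟩, ⟨_, hy⟩), Subtype.ext ?_⟩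
      simp only [q]
      rw [smul_smul, mul_inv_cancel₀ h2.ne', one_smul]
      abel
  have hqq : Topology.IsQuotientMap q := hqc.isClosedMap.isQuotientMap hqc hqs
  let h : unitInterval × bdface J → Y := fun z => H (z.1, ⟨f z.2.1, hfY z.2.2⟩)
  have hh : Continuous h := by
    apply H.continuous.comp
    refine continuous_fst.prodMk (Continuous.subtype_mk ?_ _)
    exact (continuousOn_iff_continuous_domRestrict.1 hf).comp continuous_snd
  have hle : ∀ z z', q z = q z' → (z'.1 : ℝ) ≤ z.1 := by
    rintro ⟨t, y⟩ ⟨t', y'⟩ hz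
    obtain ⟨j, hj, hyj⟩ := y.2.2
    have h1 := congrFun (congrArg Subtype.val hz) j
    simp only [q, b, Pi.add_apply, Pi.smul_apply, smul_eq_mul, hj, if_true, hyj, mul_zero,
      add_zero] at h1
    have h2 : 0 ≤ (1 - (t' : ℝ)) * y'.1 j :=
      mul_nonneg (by linarith [t'.2.2]) (y'.2.1.1.1 j)
    have h3 : (t' : ℝ) * (1 / J.card) ≤ t * (1 / J.card) := by linarith
    exact le_of_mul_le_mul_right h3 (by positivity)
  have hcomp : ∀ z z', q z = q z' → h z = h z' := by
    rintro ⟨t, y⟩ ⟨t', y'⟩ hz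
    have htt : t = t' := Subtype.ext (le_antisymm (hle _ _ hz.symm) (hle _ _ hz))
    subst htt
    by_cases h1 : t = 1
    · subst h1
      simp [h]
    · have h1' : 1 - (t : ℝ) ≠ 0 := by
        intro h0
        exact h1 (Subtype.ext (show (t : ℝ) = 1 by linarith))
      have h2 := congrArg Subtype.val hz
      simp only [q, add_right_inj] at h2
      have : y = y' := Subtype.ext (smul_right_injective _ h1' h2)
      rw [this]
  let g0 : face J → Y := fun x => h (Function.surjInv hqs x)
  have hg0 : g0 ∘ q = h := by
    funext z
    exact hcomp _ _ (Function.surjInv_eq hqs _)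
  have hg0c : Continuous g0 := by
    rw [hqq.continuous_iff, hg0]; exact hh
  refine ⟨fun x => if hx : x ∈ face J then (g0 ⟨x, hx⟩ : X) else p, ?_, ?_, ?_⟩
  · rw [continuousOn_iff_continuous_domRestrict]
    convert continuous_subtype_val.comp hg0c using 1
    funext x
    simp
  · intro x hx
    simp [hx]
  · intro x hx
    have hx' : x ∈ face J := hx.1
    simp only [hx', dif_pos]
    have h1 : q (0, ⟨x, hx⟩) = ⟨x, hx'⟩ := Subtype.ext (by simp [q])
    have h2 := congrFun hg0 (0, ⟨x, hx⟩)
    rw [Function.comp_apply, h1] at h2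
    rw [h2]
    simp [h]

theorem build_map {ι : Type*} [Fintype ι] {X : Type*} [TopologicalSpace X] [Nonempty X]
    (B : Finset ι → Set X) (hB : ∀ J, J.Nonempty → ContractibleSpace (B J))
    (hmono : ∀ I J, I ⊆ J → B I ⊆ B J) (k : ℕ) :
    ∃ f : (ι → ℝ) → X, ∀ J : Finset ι, J.Nonempty → J.card ≤ k →
      ContinuousOn f (face J) ∧ Set.MapsTo f (face J) (B J) := by
  classical
  induction k with
  | zero =>
    refine ⟨fun _ => Classical.arbitrary X, fun J hJ h => ?_⟩
    have := hJ.card_pos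
    omega
  | succ k ih =>
    obtain ⟨f, hf⟩ := ih
    have hne : ∀ I : Finset ι, ∀ x ∈ face I, I.Nonempty := by
      intro I x hx
      by_contra h
      rw [Finset.not_nonempty_iff_eq_empty] at h
      subst h
      have h1 := hx.1.2
      rw [Finset.sum_eq_zero fun i _ => hx.2 i (by simp)] at h1
      exact zero_ne_one h1
    have hstep : ∀ J : Finset ι, J.card = k + 1 → ∃ g : (ι → ℝ) → X,
        ContinuousOn g (face J) ∧ Set.MapsTo g (face J) (B J) ∧ Set.EqOn g f (bdface J) := by
      intro J hJc
      have hJ : J.Nonempty := Finset.card_pos.1 (by omega)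
      have := hB J hJ
      have hsub : ∀ i ∈ J, ∀ x ∈ face (J.erase i), ContinuousOn f (face (J.erase i)) ∧
          Set.MapsTo f (face (J.erase i)) (B (J.erase i)) := by
        intro i hi x hx
        exact hf _ (hne _ x hx) (by rw [Finset.card_erase_of_mem hi]; omega)
      apply extend_face J hJ
      · rw [bdface_eq]
        apply (locallyFinite_of_finite _).continuousOn_iUnion (fun i => face_closed _)
        intro i x hx
        exact (hsub i.1 i.2 x hx).1 x hx
      · rw [bdface_eq]
        intro x hx
        obtain ⟨i, hi⟩ := Set.mem_iUnion.1 hx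
        exact hmono _ _ (Finset.erase_subset _ _) ((hsub i.1 i.2 x hi).2 hi)
    choose! g hg using hstep
    let supp : (ι → ℝ) → Finset ι := fun x => Finset.univ.filter fun i => x i ≠ 0
    have hsupp : ∀ J, ∀ x ∈ face J, supp x ⊆ J := by
      intro J x hx i hi
      by_contra h
      exact (Finset.mem_filter.1 hi).2 (hx.2 i h)
    refine ⟨fun x => if (supp x).card = k + 1 then g (supp x) x else f x, fun J hJ hJc => ?_⟩
    rcases Nat.lt_or_ge J.card (k + 1) with hlt | hge
    · have heq : Set.EqOn (fun x => if (supp x).card = k + 1 then g (supp x) x else f x) f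
          (face J) := by
        intro x hx
        have := Finset.card_le_card (hsupp J x hx)
        simp only
        rw [if_neg (by omega)]
      obtain ⟨h1, h2⟩ := hf J hJ (by omega)
      exact ⟨h1.congr heq, h2.congr heq.symm⟩
    · have hc : J.card = k + 1 := by omega
      obtain ⟨h1, h2, h3⟩ := hg J hc
      have heq : Set.EqOn (fun x => if (supp x).card = k + 1 then g (supp x) x else f x) (g J)
          (face J) := by
        intro x hx
        have hs := hsupp J x hx
        simp only
        split_ifs with h
        · rw [Finset.eq_of_subset_of_card_le hs (by omega)]
        · refine (h3 ⟨hx, ?_⟩).symm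
          by_contra! hcon
          have : J ⊆ supp x := fun i hi => Finset.mem_filter.2 ⟨Finset.mem_univ _, hcon i hi⟩
          exact h (by rw [Finset.Subset.antisymm hs this, hc])
      exact ⟨h1.congr heq, h2.congr heq.symm⟩

/-- Base case of the topological Helly theorem: in a contractible Hausdorff space of
compact topological dimension at most `n`, if `n + 2` contractible sets, all of whose
subfamily intersections are contractible or empty, are such that every `n + 1` of them
have a common point, then all `n + 2` of them have a common point. -/
theorem topological_helly_base (n : ℕ) (hn : 1 ≤ n)
    {X : Type} [TopologicalSpace X] [T2Space X] [ContractibleSpace X]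
    (hdim : CompactTopDimLE X n)
    (A : Fin (n + 2) → Set X)
    (hA : ∀ i : Fin (n + 2), ContractibleSpace (A i))
    (hconn : ∀ s : Finset (Fin (n + 2)),
      ContractibleSpace ↥(⋂ i ∈ s, A i) ∨ (⋂ i ∈ s, A i) = ∅)
    (hinter : ∀ s : Finset (Fin (n + 2)), s.card = n + 1 → (⋂ i ∈ s, A i).Nonempty) :
    (⋂ i, A i).Nonempty := by
  classical
  by_contra hcon
  have hne : Nonempty X := inferInstance
  obtain ⟨F, hF⟩ := build_map (fun J : Finset (Fin (n + 2)) => ⋂ i ∈ Jᶜ, A i)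
    (by
      rintro J ⟨j, hj⟩
      rcases hconn Jᶜ with h | h
      · exact h
      · exfalso
        obtain ⟨x, hx⟩ := hinter (Finset.univ.erase j) (by simp)
        have : x ∈ ⋂ i ∈ Jᶜ, A i := by
          simp only [Set.mem_iInter] at hx ⊢
          intro i hi
          refine hx i (Finset.mem_erase.2 ⟨?_, Finset.mem_univ _⟩)
          rintro rfl
          exact Finset.mem_compl.1 hi hj
        rw [h] at this
        exact this)
    (by
      intro I J hIJ x hx
      simp only [Set.mem_iInter] at hx ⊢
      exact fun i hi => hx i (Finset.compl_subset_compl.2 hIJ hi)) (n + 2)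
  have hΔ : face (Finset.univ : Finset (Fin (n + 2))) = stdSimplex ℝ (Fin (n + 2)) := by
    ext x; simp [face]
  have hFc : ContinuousOn F (stdSimplex ℝ (Fin (n + 2))) := by
    rw [← hΔ]
    exact (hF Finset.univ Finset.univ_nonempty (by simp)).1
  have hFe : ∀ i : Fin (n + 2), ContinuousOn F (face (Finset.univ.erase i)) ∧
      Set.MapsTo F (face (Finset.univ.erase i)) (A i) := by
    intro i
    have h1 := hF (Finset.univ.erase i) (Finset.card_pos.1 (by simp)) (by simp)
    refine ⟨h1.1, fun x hx => ?_⟩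
    have := h1.2 hx
    simp only [Set.mem_iInter] at this
    exact this i (by simp)
  let C : Fin (n + 2) → Set X := fun i => F '' face (Finset.univ.erase i)
  have hC : ∀ i, IsClosed (C i) := fun i =>
    ((face_compact _).image_of_continuousOn (hFe i).1).isClosed
  obtain ⟨κ, V, hVo, hVK, hVU, hVm⟩ := hdim (F '' stdSimplex ℝ (Fin (n + 2)))
    ((isCompact_stdSimplex ℝ _).image_of_continuousOn hFc) (Fin (n + 2)) (fun i => (C i)ᶜ)
    (fun i => (hC i).isOpen_compl)
    (by
      intro x _
      by_contra h
      simp only [Set.mem_iUnion, Set.mem_compl_iff, not_exists, not_not] at h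
      apply hcon
      refine ⟨x, Set.mem_iInter.2 fun i => ?_⟩
      obtain ⟨y, hy, rfl⟩ := h i
      exact (hFe i).2 hy)
  choose c hc using hVU
  let F' : stdSimplex ℝ (Fin (n + 2)) → X := fun x => F x.1
  have hF' : Continuous F' := continuousOn_iff_continuous_domRestrict.1 hFc
  obtain ⟨x, hx⟩ := kkm_open (fun i => F' ⁻¹' ⋃ (j : κ) (_ : c j = i), V j)
    (fun i => (isOpen_iUnion fun j => isOpen_iUnion fun _ => hVo j).preimage hF')
    (by
      intro x
      obtain ⟨j, hj⟩ := Set.mem_iUnion.1 (hVK ⟨x.1, x.2, rfl⟩)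
      refine ⟨c j, ?_⟩
      simp only [Set.mem_preimage, Set.mem_iUnion]
      exact ⟨j, rfl, hj⟩)
    (by
      intro x i hx h0
      simp only [Set.mem_preimage, Set.mem_iUnion] at hx
      obtain ⟨j, rfl, hj⟩ := hx
      refine hc j hj ⟨x.1, ⟨x.2, fun k hk => ?_⟩, rfl⟩
      have : k = c j := by simpa using hk
      rw [this]; exact h0)
  simp only [Set.mem_preimage, Set.mem_iUnion] at hx
  choose d hd1 hd2 using hx
  obtain ⟨s, hs, hsm⟩ := hVm (F x.1) ⟨x.1, x.2, rfl⟩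
  have hinj : Function.Injective d := by
    intro i j hij
    rw [← hd1 i, ← hd1 j, hij]
  have : (Finset.univ.image d).card ≤ s.card :=
    Finset.card_le_card (by
      intro j hj
      obtain ⟨i, -, rfl⟩ := Finset.mem_image.1 hj
      exact hsm _ (hd2 i))
  rw [Finset.card_image_of_injective _ hinj] at this
  simp at this
  omega
end

section
/- Let n ≥ 1, let Δ denote the standard (n+1)-dimensional simplex, the convex hull of the standard basis e₁, …, e_{n+2} of ℝ^{n+2}, and let F_i denote its i-th n-dimensional face, consisting of the points of Δ whose i-th coordinate is zero. If G₁, …, G_{n+2} are open subsets of Δ (in the subspace topology) that cover Δ and satisfy G_i ∩ F_i = ∅ for each i ∈ {1, …, n+2}, then ⋂_{i=1}^{n+2} G_i is nonempty. -/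
set_option linter.unusedSectionVars false

namespace Scarf

/-- `R` is dominant: no point beats `R` in every order. -/
def Dom {V I : Type*} (u : I → V → ℕ) (R : Finset V) : Prop :=
  ∀ y, ∃ i, ∀ x ∈ R, u i y ≤ u i x

/-- `x` is the best candidate to replace the minimum in direction `a`. -/
def Best {V I : Type*} (u : I → V → ℕ) (m : I → V) (a : I) (x : V) : Prop :=
  (∀ i, i ≠ a → u i (m i) < u i x) ∧ ∀ y, (∀ i, i ≠ a → u i (m i) < u i y) → u a y ≤ u a x

section
variable {V I : Type*} [Fintype V] [DecidableEq V] [Fintype I] [DecidableEq I]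
  {u : I → V → ℕ}

theorem Dom.mono {R D : Finset V} (h : Dom u R) (hD : D ⊆ R) : Dom u D := by
  intro y
  obtain ⟨i, hi⟩ := h y
  exact ⟨i, fun x hx => hi x (hD hx)⟩

/-- Minimum data of a nonempty dominant set with one element less than the index set. -/
theorem door_data (hu : ∀ i, Function.Injective (u i)) {D : Finset V} (hD : Dom u D)
    (hne : D.Nonempty) (hcard : D.card + 1 = Fintype.card I) :
    ∃ (m : I → V) (a b : I), a ≠ b ∧ m a = m b ∧ (∀ i, m i ∈ D) ∧
      (∀ i, ∀ x ∈ D, u i (m i) ≤ u i x) ∧ (∀ x ∈ D, ∃ i, i ≠ a ∧ m i = x) ∧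
      (∀ x ∈ D, ∃ i, i ≠ b ∧ m i = x) ∧
      (∀ j, j ≠ a → j ≠ b → ∀ i, i ≠ j → m i ≠ m j) := by
  have h1 : ∀ i, ∃ x ∈ D, ∀ y ∈ D, u i x ≤ u i y := fun i => D.exists_min_image (u i) hne
  choose m hmD hmin using h1
  have hsurj : ∀ x ∈ D, ∃ i, m i = x := by
    intro x hx
    obtain ⟨i, hi⟩ := hD x
    exact ⟨i, hu i (le_antisymm (hmin i x hx) (hi _ (hmD i)))⟩
  obtain ⟨a, -, b, -, hab, hmab⟩ : ∃ a ∈ (Finset.univ : Finset I), ∃ b ∈ (Finset.univ : Finset I),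
      a ≠ b ∧ m a = m b := by
    apply Finset.exists_ne_map_eq_of_card_lt_of_maps_to (t := D)
    · rw [Finset.card_univ]; omega
    · intro i _; exact hmD i
  have hsa : ∀ x ∈ D, ∃ i, i ≠ a ∧ m i = x := by
    intro x hx
    obtain ⟨i, hi⟩ := hsurj x hx
    by_cases h : i = a
    · exact ⟨b, hab.symm, by rw [← hmab, ← h, hi]⟩
    · exact ⟨i, h, hi⟩
  have hsb : ∀ x ∈ D, ∃ i, i ≠ b ∧ m i = x := by
    intro x hx
    obtain ⟨i, hi⟩ := hsurj x hx
    by_cases h : i = b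
    · exact ⟨a, hab, by rw [hmab, ← h, hi]⟩
    · exact ⟨i, h, hi⟩
  refine ⟨m, a, b, hab, hmab, hmD, hmin, hsa, hsb, ?_⟩
  intro j hja hjb i hij hm
  -- removing `a` and `j` from the index set still leaves a surjection
  have hsub : D ⊆ ((Finset.univ.erase a).erase j).image m := by
    intro x hx
    obtain ⟨l, hl, hlx⟩ := hsa x hx
    rw [Finset.mem_image]
    by_cases hlj : l = j
    · by_cases hia : i = a
      · refine ⟨b, by simp [hab.symm, hjb.symm], ?_⟩
        rw [← hmab, ← hia, hm, ← hlj, hlx]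
      · exact ⟨i, by simp [hia, hij], by rw [hm, ← hlj, hlx]⟩
    · exact ⟨l, by simp [hl, hlj], hlx⟩
  have h2 := (Finset.card_le_card hsub).trans Finset.card_image_le
  rw [Finset.card_erase_of_mem (by simp [hja]), Finset.card_erase_of_mem (by simp),
    Finset.card_univ] at h2
  have : 0 < D.card := hne.card_pos
  omega

theorem dom_insert_of_best {D : Finset V} {m : I → V} {a : I} (hmin : ∀ i, ∀ x ∈ D, u i (m i) ≤ u i x)
    (hsa : ∀ x ∈ D, ∃ i, i ≠ a ∧ m i = x) (hD : Dom u D) (hmD : ∀ i, m i ∈ D) {x : V}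
    (hx : Best u m a x) : x ∉ D ∧ Dom u (insert x D) := by
  constructor
  · intro hxD
    obtain ⟨i, hi, rfl⟩ := hsa x hxD
    exact lt_irrefl _ (hx.1 i hi)
  · intro y
    have hxa : u a x ≤ u a (m a) := by
      obtain ⟨i, hi⟩ := hD x
      by_cases h : i = a
      · subst h; exact hi _ (hmD _)
      · exact absurd (hi _ (hmD i)) (not_le.2 (hx.1 i h))
    by_cases hy : ∀ i, i ≠ a → u i (m i) < u i y
    · refine ⟨a, fun z hz => ?_⟩
      have := hx.2 y hy
      rcases Finset.mem_insert.1 hz with rfl | hz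
      · exact this
      · exact this.trans (hxa.trans (hmin a z hz))
    · push Not at hy
      obtain ⟨i, hia, hi⟩ := hy
      refine ⟨i, fun z hz => ?_⟩
      rcases Finset.mem_insert.1 hz with rfl | hz
      · exact hi.trans (hx.1 i hia).le
      · exact hi.trans (hmin i z hz)

theorem best_of_dom_insert (hu : ∀ i, Function.Injective (u i)) {D : Finset V} {m : I → V} {a b : I}
    (hmD : ∀ i, m i ∈ D) (hmin : ∀ i, ∀ x ∈ D, u i (m i) ≤ u i x)
    (hne : D.Nonempty) (hcard : D.card + 1 = Fintype.card I)
    (hj : ∀ j, j ≠ a → j ≠ b → ∀ i, i ≠ j → m i ≠ m j) {x : V} (hx : x ∉ D)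
    (h : Dom u (insert x D)) : Best u m a x ∨ Best u m b x := by
  obtain ⟨j, hjx⟩ := h x
  have hlt : ∀ i, i ≠ j → u i (m i) < u i x := by
    intro i hij
    by_contra hcon
    push Not at hcon
    have hmx : ∀ l, u l x ≤ u l (m l) → ∀ d ∈ D, u l d ≤ u l x → False := by
      intro l h1 d hd h2
      have h3 : d = x := hu l (le_antisymm h2 (h1.trans (hmin l d hd)))
      exact hx (h3 ▸ hd)
    have hsub : D ⊆ ((Finset.univ.erase i).erase j).image m := by
      intro d hd
      obtain ⟨l, hl⟩ := h d
      have hdx := hl x (Finset.mem_insert_self _ _)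
      rw [Finset.mem_image]
      refine ⟨l, ?_, hu l (le_antisymm (hmin l d hd) (hl _ (Finset.mem_insert_of_mem (hmD l))))⟩
      simp only [Finset.mem_erase, Finset.mem_univ, and_true]
      constructor
      · rintro rfl
        exact hmx l (hjx _ (Finset.mem_insert_of_mem (hmD l))) d hd hdx
      · rintro rfl
        exact hmx l hcon d hd hdx
    have h2 := (Finset.card_le_card hsub).trans Finset.card_image_le
    rw [Finset.card_erase_of_mem (by simp [Ne.symm hij]), Finset.card_erase_of_mem (by simp),
      Finset.card_univ] at h2
    have : 0 < D.card := hne.card_pos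
    omega
  have hbest : Best u m j x := by
    refine ⟨hlt, fun y hy => ?_⟩
    obtain ⟨i, hi⟩ := h y
    by_cases hij : i = j
    · subst hij; exact hi x (Finset.mem_insert_self _ _)
    · exact absurd (hi _ (Finset.mem_insert_of_mem (hmD i))) (not_le.2 (hy i hij))
  by_cases hja : j = a
  · left; rwa [← hja]
  by_cases hjb : j = b
  · right; rwa [← hjb]
  exfalso
  obtain ⟨i, hi⟩ := h (m j)
  by_cases hij : i = j
  · subst hij
    have h1 := hi x (Finset.mem_insert_self _ _)
    have h2 := hjx _ (Finset.mem_insert_of_mem (hmD i))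
    exact hx (hu i (le_antisymm h1 h2) ▸ hmD i)
  · refine hj j hja hjb i hij (hu i (le_antisymm (hmin i _ (hmD j)) ?_))
    exact hi _ (Finset.mem_insert_of_mem (hmD i))

open Classical in
/-- Generic doors lie in exactly two rooms. -/
theorem card_rooms_two (hu : ∀ i, Function.Injective (u i)) {D : Finset V} (hD : Dom u D)
    (hne : D.Nonempty) (hcard : D.card + 1 = Fintype.card I)
    (hcand : ∀ (m : I → V) (a b : I), a ≠ b → m a = m b → (∀ i, m i ∈ D) →
      (∀ i, ∀ x ∈ D, u i (m i) ≤ u i x) → ∃ y, ∀ i, i ≠ a → u i (m i) < u i y) :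
    (Finset.univ.filter fun R : Finset V =>
      (R.card = Fintype.card I ∧ Dom u R) ∧ D ⊆ R).card = 2 := by
  obtain ⟨m, a, b, hab, hmab, hmD, hmin, hsa, hsb, hj⟩ := door_data hu hD hne hcard
  have hex : ∀ a, (∃ y, ∀ i, i ≠ a → u i (m i) < u i y) → ∃ x, Best u m a x := by
    rintro a ⟨y, hy⟩
    obtain ⟨x, hx, hmax⟩ := (Finset.univ.filter fun y => ∀ i, i ≠ a → u i (m i) < u i y).exists_max_image
      (u a) ⟨y, by simpa using hy⟩
    refine ⟨x, by simpa using hx, fun z hz => hmax z (by simpa using hz)⟩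
  obtain ⟨x, hx⟩ := hex a (hcand m a b hab hmab hmD hmin)
  obtain ⟨x', hx'⟩ := hex b (hcand m b a hab.symm hmab.symm hmD hmin)
  obtain ⟨hxD, hxR⟩ := dom_insert_of_best hmin hsa hD hmD hx
  obtain ⟨hxD', hxR'⟩ := dom_insert_of_best hmin hsb hD hmD hx'
  have huniq : ∀ a x y, Best u m a x → Best u m a y → x = y := by
    intro a x y hx hy
    exact hu a (le_antisymm (hy.2 x hx.1) (hx.2 y hy.1))
  rw [Finset.card_eq_two]
  refine ⟨insert x D, insert x' D, ?_, ?_⟩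
  · intro heq
    have h1 : x ∈ insert x' D := heq ▸ Finset.mem_insert_self x D
    rcases Finset.mem_insert.1 h1 with h1 | h1
    · subst h1
      obtain ⟨i, hi⟩ := hD x
      have h2 := hi _ (hmD i)
      by_cases hia : i = a
      · exact absurd h2 (not_le.2 (hx'.1 i (hia ▸ hab)))
      · exact absurd h2 (not_le.2 (hx.1 i hia))
    · exact hxD h1
  · ext R
    simp only [Finset.mem_filter, Finset.mem_univ, true_and, Finset.mem_insert,
      Finset.mem_singleton]
    constructor
    · rintro ⟨⟨hc, hR⟩, hDR⟩
      obtain ⟨y, hyD, rfl⟩ := Finset.exists_eq_insert_iff.2 ⟨hDR, hcard.trans hc.symm⟩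
      rcases best_of_dom_insert hu hmD hmin hne hcard hj hyD hR with h | h
      · left; rw [huniq a x y hx h]
      · right; rw [huniq b x' y hx' h]
    · rintro (rfl | rfl)
      · exact ⟨⟨by rw [Finset.card_insert_of_notMem hxD, hcard], hxR⟩, Finset.subset_insert _ _⟩
      · exact ⟨⟨by rw [Finset.card_insert_of_notMem hxD', hcard], hxR'⟩, Finset.subset_insert _ _⟩

/-- A door of type `k`. -/
def Door (u : I → V → ℕ) (c : V → I) (k : I) (D : Finset V) : Prop :=
  D.card + 1 = Fintype.card I ∧ Dom u D ∧ D.image c = Finset.univ.erase k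

theorem Door.injOn {c : V → I} {k : I} {D : Finset V} (h : Door u c k D) :
    Set.InjOn c D := by
  rw [← Finset.card_image_iff, h.2.2, Finset.card_erase_of_mem (Finset.mem_univ _),
    Finset.card_univ, ← h.1]
  rfl

open Classical in
/-- A room which is not colourful has an even number of doors of type `k`. -/
theorem even_doors (c : V → I) (k : I) {R : Finset V} (hc : R.card = Fintype.card I)
    (hR : Dom u R) (hcol : R.image c ≠ Finset.univ) :
    Even (Finset.univ.filter fun D : Finset V => Door u c k D ∧ D ⊆ R).card := by
  by_cases hex : ∃ D, Door u c k D ∧ D ⊆ R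
  swap
  · push Not at hex
    rw [Finset.filter_false_of_mem (by simpa using hex)]
    simp
  obtain ⟨D, hD, hDR⟩ := hex
  obtain ⟨x, hxD, rfl⟩ := Finset.exists_eq_insert_iff.2 ⟨hDR, hD.1.trans hc.symm⟩
  have hcx : c x ≠ k := by
    intro h
    apply hcol
    rw [Finset.image_insert, hD.2.2, h, Finset.insert_erase (Finset.mem_univ _)]
  have hmem : c x ∈ D.image c := by rw [hD.2.2]; simp [hcx]
  obtain ⟨y, hyD, hyx⟩ := Finset.mem_image.1 hmem
  have hxE : x ∉ D.erase y := fun h => hxD (Finset.mem_of_mem_erase h)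
  have : (Finset.univ.filter fun D' : Finset V => Door u c k D' ∧ D' ⊆ insert x D) =
      {D, insert x (D.erase y)} := by
    ext D'
    simp only [Finset.mem_filter, Finset.mem_univ, true_and, Finset.mem_insert,
      Finset.mem_singleton]
    constructor
    · rintro ⟨hD', hsub⟩
      obtain ⟨z, hz, hzR⟩ := Finset.exists_eq_insert_iff.2 ⟨hsub, hD'.1.trans hc.symm⟩
      have hD'e : D' = (insert x D).erase z := by rw [← hzR, Finset.erase_insert hz]
      by_cases hzx : z = x
      · left; rw [hD'e, hzx, Finset.erase_insert hxD]
      by_cases hzy : z = y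
      · right; rw [hD'e, hzy, Finset.erase_insert_of_ne]
        rintro rfl; exact hxD hyD
      exfalso
      have hx' : x ∈ D' := by rw [hD'e]; simp [Ne.symm hzx]
      have hy' : y ∈ D' := by rw [hD'e]; simp [Ne.symm hzy, hyD]
      have := hD'.injOn hy' hx' hyx
      exact hxD (this ▸ hyD)
    · rintro (rfl | rfl)
      · exact ⟨hD, hDR⟩
      · have hs : insert x (D.erase y) ⊆ insert x D :=
          Finset.insert_subset_insert _ (Finset.erase_subset _ _)
        refine ⟨⟨?_, hR.mono hs, ?_⟩, hs⟩
        · rw [Finset.card_insert_of_notMem hxE, Finset.card_erase_add_one hyD, hD.1]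
        · rw [← hD.2.2]
          conv_rhs => rw [← Finset.insert_erase hyD]
          rw [Finset.image_insert, Finset.image_insert, hyx]
  rw [this, Finset.card_pair]
  · exact even_two
  · intro h
    exact hxD (h ▸ Finset.mem_insert_self _ _)

open Classical in
/-- Abstract Sperner parity argument. -/
theorem exists_colourful (c : V → I) (k : I) (D₀ : Finset V) (hD₀ : Door u c k D₀)
    (h1 : (Finset.univ.filter fun R : Finset V =>
      (R.card = Fintype.card I ∧ Dom u R) ∧ D₀ ⊆ R).card = 1)
    (h2 : ∀ D, Door u c k D → D ≠ D₀ → (Finset.univ.filter fun R : Finset V =>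
      (R.card = Fintype.card I ∧ Dom u R) ∧ D ⊆ R).card = 2) :
    ∃ R : Finset V, R.card = Fintype.card I ∧ Dom u R ∧ R.image c = Finset.univ := by
  by_contra hcon
  push Not at hcon
  have key := Finset.sum_card_bipartiteAbove_eq_sum_card_bipartiteBelow
    (s := Finset.univ.filter fun D : Finset V => Door u c k D)
    (t := Finset.univ.filter fun R : Finset V => R.card = Fintype.card I ∧ Dom u R)
    (fun D R => D ⊆ R)
  simp only [Finset.bipartiteAbove, Finset.bipartiteBelow, Finset.filter_filter] at key
  have he : Even (∑ b ∈ Finset.univ.filter (fun R : Finset V => R.card = Fintype.card I ∧ Dom u R),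
      (Finset.univ.filter fun D : Finset V => Door u c k D ∧ D ⊆ b).card) := by
    apply Finset.even_sum
    intro R hR
    simp only [Finset.mem_filter, Finset.mem_univ, true_and] at hR
    exact even_doors c k hR.1 hR.2 (hcon R hR.1 hR.2)
  rw [← key, ← Finset.add_sum_erase _ _ (a := D₀) (by simpa using hD₀), h1] at he
  have he2 : Even (∑ D ∈ (Finset.univ.filter fun D : Finset V => Door u c k D).erase D₀,
      (Finset.univ.filter fun R : Finset V =>
        (R.card = Fintype.card I ∧ Dom u R) ∧ D ⊆ R).card) := by
    apply Finset.even_sum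
    intro D hD
    simp only [Finset.mem_erase, Finset.mem_filter, Finset.mem_univ, true_and] at hD
    rw [h2 D hD.2 hD.1]
    exact even_two
  rw [Nat.even_add] at he
  exact Nat.not_even_one (he.2 he2)

end

section
variable {T I : Type*} [Fintype T] [DecidableEq T] [Fintype I] [DecidableEq I]
  {u : I → T ⊕ I → ℕ}

/-- Scarf's lemma. -/
theorem scarf [Nonempty T] (k : I) (hI : 2 ≤ Fintype.card I) (hu : ∀ i, Function.Injective (u i))
    (d1 : ∀ i t, u i (Sum.inr i) < u i (Sum.inl t))
    (d2 : ∀ i j t, j ≠ i → u i (Sum.inl t) < u i (Sum.inr j)) (c : T → I) :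
    ∃ R : Finset (T ⊕ I), R.card = Fintype.card I ∧ Dom u R ∧
      R.image (Sum.elim c id) = Finset.univ := by
  classical
  obtain ⟨t₀⟩ := ‹Nonempty T›
  have dmin : ∀ i z, u i (Sum.inr i) ≤ u i z := by
    rintro i (t | j)
    · exact (d1 i t).le
    · by_cases h : j = i
      · rw [h]
      · exact ((d1 i t₀).trans (d2 i j t₀ h)).le
  have hcardD : ((Finset.univ.erase k).image (Sum.inr : I → T ⊕ I)).card + 1 = Fintype.card I := by
    rw [Finset.card_image_of_injective _ Sum.inr_injective, Finset.card_erase_add_one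
      (Finset.mem_univ _), Finset.card_univ]
  have hdomD : Dom u ((Finset.univ.erase k).image (Sum.inr : I → T ⊕ I)) := by
    rintro (t | j)
    · refine ⟨k, fun x hx => ?_⟩
      obtain ⟨j, hj, rfl⟩ := Finset.mem_image.1 hx
      exact (d2 k j t (Finset.ne_of_mem_erase hj)).le
    · exact ⟨j, fun x _ => dmin j x⟩
  apply exists_colourful (Sum.elim c id) k ((Finset.univ.erase k).image Sum.inr)
  · refine ⟨hcardD, hdomD, ?_⟩
    rw [Finset.image_image]
    simp
  · obtain ⟨t, -, ht⟩ := (Finset.univ : Finset T).exists_max_image (fun t => u k (Sum.inl t))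
      ⟨t₀, Finset.mem_univ _⟩
    have htD : (Sum.inl t : T ⊕ I) ∉ (Finset.univ.erase k).image (Sum.inr : I → T ⊕ I) := by simp
    rw [Finset.card_eq_one]
    refine ⟨insert (Sum.inl t) ((Finset.univ.erase k).image Sum.inr), ?_⟩
    ext R
    simp only [Finset.mem_filter, Finset.mem_univ, true_and, Finset.mem_singleton]
    constructor
    · rintro ⟨⟨hc, hR⟩, hDR⟩
      obtain ⟨y, hyD, rfl⟩ := Finset.exists_eq_insert_iff.2 ⟨hDR, hcardD.trans hc.symm⟩
      have hmem : ∀ j, j ≠ k → (Sum.inr j : T ⊕ I) ∈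
          insert y ((Finset.univ.erase k).image (Sum.inr : I → T ⊕ I)) := by
        intro j hj
        apply Finset.mem_insert_of_mem
        simp [hj]
      rcases y with s | j
      · obtain ⟨i, hi⟩ := hR (Sum.inl t)
        by_cases hik : i = k
        · subst hik
          have h3 := hi _ (Finset.mem_insert_self _ _)
          rw [hu i (le_antisymm h3 (ht s (Finset.mem_univ _)))]
        · exact absurd (hi _ (hmem i hik)) (not_le.2 (d1 i t))
      · exfalso
        have hjk : j = k := by simpa using hyD
        subst hjk
        obtain ⟨i, hi⟩ := hR (Sum.inl t)
        by_cases hik : i = j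
        · subst hik
          exact absurd (hi _ (Finset.mem_insert_self _ _)) (not_le.2 (d1 i t))
        · exact absurd (hi _ (hmem i hik)) (not_le.2 (d1 i t))
    · rintro rfl
      refine ⟨⟨by rw [Finset.card_insert_of_notMem htD, hcardD], ?_⟩, Finset.subset_insert _ _⟩
      rintro (s | j)
      · refine ⟨k, fun x hx => ?_⟩
        rcases Finset.mem_insert.1 hx with rfl | hx
        · exact ht s (Finset.mem_univ _)
        · obtain ⟨j, hj, rfl⟩ := Finset.mem_image.1 hx
          exact (d2 k j s (Finset.ne_of_mem_erase hj)).le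
      · exact ⟨j, fun x _ => dmin j x⟩
  · intro D hD hne
    have hD0 : D.Nonempty := by
      rw [← Finset.card_pos]; have := hD.1; omega
    obtain ⟨t, ht⟩ : ∃ t, Sum.inl t ∈ D := by
      by_contra hno
      push Not at hno
      apply hne
      apply Finset.eq_of_subset_of_card_le
      · rintro (t | j) hx
        · exact absurd hx (hno t)
        · have : Sum.elim c id (Sum.inr j) ∈ D.image (Sum.elim c id) := Finset.mem_image_of_mem _ hx
          rw [hD.2.2] at this
          simpa using this
      · have := hD.1; omega
    refine card_rooms_two hu hD.2.1 hD0 hD.1 ?_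
    intro m a b hab hmab hmD hmin
    refine ⟨Sum.inr a, fun i hi => ?_⟩
    exact (hmin i _ ht).trans_lt (d2 i a t (Ne.symm hi))

end
end Scarf

namespace Scarf
section
variable {I : Type*} [Fintype I] [DecidableEq I]

/-- Grid points of the simplex with mesh `1 / N`. -/
abbrev Grid (I : Type*) [Fintype I] (N : ℕ) := {a : I → Fin (N + 1) // ∑ i, (a i : ℕ) = N}

/-- A point of the grid built from a natural-valued function. -/
theorem exists_grid {N : ℕ} (g : I → ℕ) (k : I) (hg : ∑ i, g i ≤ N) :
    ∃ a : Grid I N, ∀ i, g i ≤ (a.1 i : ℕ) := by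
  let y : I → ℕ := g + Pi.single k (N - ∑ i, g i)
  have hy : ∑ i, y i = N := by
    simp only [y, Pi.add_apply, Finset.sum_add_distrib, Finset.sum_pi_single', Finset.mem_univ,
      if_true]
    omega
  have hle : ∀ i, y i < N + 1 := by
    intro i
    have := Finset.single_le_sum (f := y) (fun _ _ => Nat.zero_le _) (Finset.mem_univ i)
    omega
  refine ⟨⟨fun i => ⟨y i, hle i⟩, hy⟩, fun i => ?_⟩
  simp [y]

/-- Orders on the grid together with the dummies. -/
theorem exists_orders (I : Type*) [Fintype I] [DecidableEq I] (N : ℕ) :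
    ∃ u : I → Grid I N ⊕ I → ℕ, (∀ i, Function.Injective (u i)) ∧
    (∀ i t, u i (Sum.inr i) < u i (Sum.inl t)) ∧
    (∀ i j t, j ≠ i → u i (Sum.inl t) < u i (Sum.inr j)) ∧
    (∀ i (s t : Grid I N), (s.1 i : ℕ) < t.1 i → u i (Sum.inl s) < u i (Sum.inl t)) := by
  let K := Fintype.card (Grid I N)
  let e := Fintype.equivFin (Grid I N)
  let f := Fintype.equivFin I
  let u : I → Grid I N ⊕ I → ℕ := fun i => Sum.elim (fun a => 1 + (e a : ℕ) + K * (a.1 i : ℕ))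
    (fun j => if j = i then 0 else 1 + K * (N + 1) + (f j : ℕ))
  have d1 : ∀ i t, u i (Sum.inr i) < u i (Sum.inl t) := by
    intro i t
    simp only [u, Sum.elim_inl, Sum.elim_inr, if_true]
    omega
  have d2 : ∀ i j t, j ≠ i → u i (Sum.inl t) < u i (Sum.inr j) := by
    intro i j t h
    simp only [u, Sum.elim_inl, Sum.elim_inr, if_neg h]
    have h1 : (e t : ℕ) < K := (e t).2
    have h2 : (t.1 i : ℕ) ≤ N := Nat.lt_succ_iff.1 (t.1 i).2
    have h3 : K * (t.1 i : ℕ) ≤ K * N := Nat.mul_le_mul_left _ h2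
    have h4 : K * (N + 1) = K * N + K := by ring
    omega
  have d3 : ∀ i (s t : Grid I N), (s.1 i : ℕ) < t.1 i → u i (Sum.inl s) < u i (Sum.inl t) := by
    intro i s t h
    simp only [u, Sum.elim_inl]
    have h1 : (e s : ℕ) < K := (e s).2
    have h3 : K * ((s.1 i : ℕ) + 1) ≤ K * (t.1 i : ℕ) := Nat.mul_le_mul_left _ h
    have h4 : K * ((s.1 i : ℕ) + 1) = K * (s.1 i : ℕ) + K := by ring
    omega
  refine ⟨u, ?_, d1, d2, d3⟩
  intro i
  rintro (s | j) (t | l) h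
  · rcases lt_trichotomy (s.1 i : ℕ) (t.1 i) with h1 | h1 | h1
    · exact absurd h (d3 i s t h1).ne
    · simp only [u, Sum.elim_inl, h1] at h
      have : e s = e t := Fin.ext (by omega)
      rw [e.injective this]
    · exact absurd h (d3 i t s h1).ne'
  · exfalso
    by_cases hl : l = i
    · subst hl; exact (d1 l s).ne' h
    · exact (d2 i l s hl).ne h
  · exfalso
    by_cases hl : j = i
    · subst hl; exact (d1 j t).ne h
    · exact (d2 i j t hl).ne' h
  · simp only [u, Sum.elim_inr] at h
    by_cases hj : j = i <;> by_cases hl : l = i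
    · rw [hj, hl]
    · simp only [hj, hl, if_true, if_false] at h; omega
    · simp only [hj, hl, if_true, if_false] at h; omega
    · simp only [hj, hl, if_false] at h
      have : f j = f l := Fin.ext (by omega)
      rw [f.injective this]

/-- Combinatorial statement for colourings of the grid. -/
theorem grid_colour (hI : 2 ≤ Fintype.card I) (N : ℕ) (c : Grid I N → I) :
    ∃ (C : Finset I) (p : I → Grid I N), C.Nonempty ∧ (∀ i ∈ C, c (p i) = i) ∧
      (∀ i ∈ C, ∀ j ∈ C, ∀ l, ((p i).1 l : ℕ) < (p j).1 l + Fintype.card I) ∧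
      (∀ i ∈ C, ∀ l, l ∉ C → ((p i).1 l : ℕ) < Fintype.card I) := by
  classical
  obtain ⟨u, hu, d1, d2, d3⟩ := exists_orders I N
  obtain ⟨k⟩ : Nonempty I := Fintype.card_pos_iff.1 (by omega)
  obtain ⟨t₀, -⟩ := exists_grid (N := N) (fun _ : I => 0) k (by simp)
  have : Nonempty (Grid I N) := ⟨t₀⟩
  obtain ⟨R, hcR, hR, hcol⟩ := scarf k hI hu d1 d2 c
  let C : Finset I := Finset.univ.filter fun i => Sum.inr i ∉ R
  have hC : ∀ i, i ∈ C ↔ Sum.inr i ∉ R := by simp [C]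
  have hp : ∀ i, ∃ t : Grid I N, i ∈ C → Sum.inl t ∈ R ∧ c t = i := by
    intro i
    by_cases hi : i ∈ C
    · have : i ∈ R.image (Sum.elim c id) := by rw [hcol]; exact Finset.mem_univ _
      obtain ⟨x, hx, hxi⟩ := Finset.mem_image.1 this
      rcases x with t | j
      · exact ⟨t, fun _ => ⟨hx, hxi⟩⟩
      · have hji : j = i := hxi
        subst hji
        exact absurd hx ((hC j).1 hi)
    · exact ⟨t₀, fun h => absurd h hi⟩
  choose p hp using hp
  have hCne : C.Nonempty := by
    obtain ⟨i, hi⟩ := hR (Sum.inl t₀)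
    refine ⟨i, (hC i).2 fun h => ?_⟩
    exact absurd (hi _ h) (not_le.2 (d1 i t₀))
  let S : Finset (Grid I N) := Finset.univ.filter fun t => Sum.inl t ∈ R
  have hS : ∀ t, t ∈ S ↔ Sum.inl t ∈ R := by simp [S]
  obtain ⟨i₀, hi₀⟩ := hCne
  have hmin : ∀ i, ∃ t ∈ S, ∀ s ∈ S, (t.1 i : ℕ) ≤ s.1 i := fun i =>
    S.exists_min_image (fun t => (t.1 i : ℕ)) ⟨p i₀, (hS _).2 (hp i₀ hi₀).1⟩
  choose q hqS hq using hmin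
  have hsum : N < ∑ i ∈ C, (((q i).1 i : ℕ) + 1) := by
    by_contra hcon
    push Not at hcon
    obtain ⟨y, hy⟩ := exists_grid (N := N) (fun i => if i ∈ C then ((q i).1 i : ℕ) + 1 else 0) k (by
      rw [Finset.sum_ite_mem, Finset.univ_inter]; exact hcon)
    obtain ⟨i, hi⟩ := hR (Sum.inl y)
    by_cases hiC : i ∈ C
    · have h1 := hy i
      rw [if_pos hiC] at h1
      exact absurd (hi _ ((hS _).1 (hqS i))) (not_le.2 (d3 i (q i) y h1))
    · have h1 : Sum.inr i ∈ R := by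
        by_contra h; exact hiC ((hC i).2 h)
      exact absurd (hi _ h1) (not_le.2 (d1 i y))
  rw [Finset.sum_add_distrib, Finset.sum_const, smul_eq_mul, mul_one] at hsum
  have hCc : C.card ≤ Fintype.card I := Finset.card_le_univ C
  -- total excess bound
  have hbound : ∀ t ∈ S, ∀ l, (t.1 l : ℕ) < (if l ∈ C then ((q l).1 l : ℕ) else 0) + Fintype.card I := by
    intro t ht l
    have h1 : ∑ i, (if i ∈ C then ((q i).1 i : ℕ) else 0) = ∑ i ∈ C, ((q i).1 i : ℕ) := by
      rw [Finset.sum_ite_mem, Finset.univ_inter]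
    have h2 : ∀ i, (if i ∈ C then ((q i).1 i : ℕ) else 0) ≤ t.1 i := by
      intro i
      split_ifs
      · exact hq i t ht
      · exact Nat.zero_le _
    have h3 := t.2
    rw [← Finset.add_sum_erase _ _ (Finset.mem_univ l)] at h1 h3
    have h4 := Finset.sum_le_sum (s := Finset.univ.erase l) (fun i _ => h2 i)
    omega
  refine ⟨C, p, ⟨i₀, hi₀⟩, fun i hi => (hp i hi).2, ?_, ?_⟩
  · intro i hi j hj l
    have h1 := hbound (p i) ((hS _).2 (hp i hi).1) l
    have h2 := hq l (p j) ((hS _).2 (hp j hj).1)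
    split_ifs at h1 <;> omega
  · intro i hi l hl
    have h1 := hbound (p i) ((hS _).2 (hp i hi).1) l
    rw [if_neg hl] at h1
    omega

end
end Scarf

/-- Topological Sperner / open KKM lemma: if `n + 2` open subsets of the standard
`(n+1)`-simplex cover it and the `i`-th one is disjoint from the `i`-th facet, then
they have a common point. -/
theorem open_kkm (n : ℕ) (hn : 1 ≤ n)
    (G : Fin (n + 2) → Set (stdSimplex ℝ (Fin (n + 2))))
    (hGopen : ∀ i, IsOpen (G i))
    (hGcover : (⋃ i, G i) = Set.univ)
    (hGface : ∀ i : Fin (n + 2),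
      G i ∩ {x : stdSimplex ℝ (Fin (n + 2)) | (x : Fin (n + 2) → ℝ) i = 0} = ∅) :
    (⋂ i, G i).Nonempty := by
  have : CompactSpace (stdSimplex ℝ (Fin (n + 2))) :=
    isCompact_iff_compactSpace.1 (isCompact_stdSimplex ℝ (Fin (n + 2)))
  obtain ⟨δ, hδ, hleb⟩ := lebesgue_number_lemma_of_metric (isCompact_univ) hGopen hGcover.ge
  have hleb' : ∀ x : stdSimplex ℝ (Fin (n + 2)), ∃ i, Metric.ball x δ ⊆ G i :=
    fun x => hleb x (Set.mem_univ x)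
  choose lab hlab using hleb'
  obtain ⟨N, hN⟩ := exists_nat_gt (((n : ℝ) + 2) / δ)
  have hNpos : (0 : ℝ) < N := lt_of_le_of_lt (by positivity) hN
  have hmesh : ((n : ℝ) + 2) / N < δ := by
    rw [div_lt_iff₀ hδ] at hN
    rw [div_lt_iff₀ hNpos]
    linarith
  let P : Scarf.Grid (Fin (n + 2)) N → stdSimplex ℝ (Fin (n + 2)) := fun a =>
    ⟨fun i => ((a.1 i : ℕ) : ℝ) / N, fun i => by positivity, by
      rw [← Finset.sum_div, ← Nat.cast_sum, a.2]
      exact div_self hNpos.ne'⟩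
  obtain ⟨C, p, hCne, hpc, hclose, hface⟩ := Scarf.grid_colour (I := Fin (n + 2)) (by simp) N
    (fun a => lab (P a) + 1)
  simp only [Fintype.card_fin] at hclose hface
  have hstep : ∀ i ∈ C, lab (P (p i)) ∈ C := by
    intro i hi
    by_contra hcon
    set l := lab (P (p i)) with hl
    have h1 := hface i hi l hcon
    have h1' : (P (p i)).1 l < δ := by
      refine lt_of_le_of_lt ?_ hmesh
      change (((p i).1 l : ℕ) : ℝ) / N ≤ _
      gcongr
      exact_mod_cast h1.le
    have hne : l + 1 ≠ l := by simp
    set x := P (p i) with hx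
    let d : Fin (n + 2) → ℝ := Pi.single (l + 1) (x.1 l) - Pi.single l (x.1 l)
    have hx0 : ∀ j, 0 ≤ x.1 j := x.2.1
    have hdl : d l = - x.1 l := by simp [d, hne]
    have hdl1 : d (l + 1) = x.1 l := by simp [d, hne]
    have hdo : ∀ j, j ≠ l → j ≠ l + 1 → d j = 0 := by
      intro j h1 h2; simp [d, h1, h2]
    let y : stdSimplex ℝ (Fin (n + 2)) := ⟨x.1 + d, by
      intro j
      have := hx0 j
      have := hx0 l
      by_cases h1 : j = l
      · subst h1; simp [hdl]
      by_cases h2 : j = l + 1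
      · subst h2; simp only [Pi.add_apply, hdl1]; linarith
      · simp only [Pi.add_apply, hdo j h1 h2]; linarith, by
      have := x.2.2
      simp only [Pi.add_apply, Finset.sum_add_distrib, d, Pi.sub_apply, Finset.sum_sub_distrib,
        Finset.sum_pi_single', Finset.mem_univ, if_true]
      linarith⟩
    have hy : y ∈ Metric.ball x δ := by
      rw [Metric.mem_ball, Subtype.dist_eq, dist_pi_lt_iff hδ]
      intro j
      change dist (x.1 j + d j) (x.1 j) < δ
      rw [Real.dist_eq, add_sub_cancel_left]
      by_cases h1 : j = l
      · rw [h1, hdl, abs_neg, abs_of_nonneg (hx0 l)]; exact h1'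
      by_cases h2 : j = l + 1
      · rw [h2, hdl1, abs_of_nonneg (hx0 l)]; exact h1'
      · rw [hdo j h1 h2, abs_zero]; exact hδ
    have hyl : y.1 l = 0 := by
      change x.1 l + d l = 0
      rw [hdl]; ring
    have : y ∈ G l ∩ {x : stdSimplex ℝ (Fin (n + 2)) | (x : Fin (n + 2) → ℝ) l = 0} :=
      ⟨hlab x hy, hyl⟩
    rw [hGface l] at this
    exact this
  have hpred : ∀ i ∈ C, i - 1 ∈ C := by
    intro i hi
    have h1 := hstep i hi
    have h2 : lab (P (p i)) + 1 = i := hpc i hi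
    rwa [← h2, add_sub_cancel_right]
  obtain ⟨i₀, hi₀⟩ := hCne
  have hall : ∀ i, i ∈ C := by
    have h1 : ∀ j : Fin (n + 2), i₀ - j ∈ C := by
      intro j
      induction j using Fin.induction with
      | zero => simpa using hi₀
      | succ j ih =>
        have := hpred _ ih
        rwa [sub_sub, Fin.coeSucc_eq_succ] at this
    intro i
    have := h1 (i₀ - i)
    rwa [sub_sub_cancel] at this
  refine ⟨P (p i₀), Set.mem_iInter.2 fun i => ?_⟩
  have h2 : lab (P (p (i + 1))) + 1 = i + 1 := hpc (i + 1) (hall _)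
  have h3 : lab (P (p (i + 1))) = i := add_right_cancel h2
  have h4 := hlab (P (p (i + 1)))
  rw [h3] at h4
  apply h4
  rw [Metric.mem_ball, Subtype.dist_eq, dist_pi_lt_iff hδ]
  intro l
  refine lt_of_le_of_lt ?_ hmesh
  have ha := hclose i₀ hi₀ (i + 1) (hall _) l
  have hb := hclose (i + 1) (hall _) i₀ hi₀ l
  change dist ((((p i₀).1 l : ℕ) : ℝ) / N) ((((p (i + 1)).1 l : ℕ) : ℝ) / N) ≤ _
  rw [Real.dist_eq, ← sub_div, abs_div, abs_of_pos hNpos]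
  gcongr
  have ha' : (((p i₀).1 l : ℕ) : ℝ) ≤ ((p (i + 1)).1 l : ℕ) + ((n : ℝ) + 2) := by
    exact_mod_cast ha.le
  have hb' : (((p (i + 1)).1 l : ℕ) : ℝ) ≤ ((p i₀).1 l : ℕ) + ((n : ℝ) + 2) := by
    exact_mod_cast hb.le
  rw [abs_le]
  constructor <;> linarith
end
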